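/- Let n ≥ 3 and let φ:(0,∞)→(0,∞) be a nondecreasing function satisfying ∫_{t_*}^∞ (t/φ(t))^{1/(n−2)} dt < ∞ for some t_* ∈ (0,∞). Then every continuous mapping f ∈ W^{1,φ}_loc possesses the (N)-property with respect to (n−1)-dimensional Hausdorff measure on almost every sphere S centered at a given prescribed point x_0 ∈ ℝ^n (almost every with respect to the radius); moreover, f is locally absolutely continuous on almost all such spheres, and on almost all such spheres S one has H^{n−1}(f(E)) = 0 whenever |∇f| = 0 on the set E ⊂ S. -/

import Mathlib

open MeasureTheory Metric Set Filter
open scoped ENNReal NNReal Topology RealInnerProductSpace Classical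

noncomputable section

abbrev Eucl (n : ℕ) : Type := EuclideanSpace ℝ (Fin n)

/-- A `k`-dimensional surface in `ℝⁿ`: a continuous map defined on an open subset of the
one-point compactification of `ℝᵏ`. -/
structure Surface (n k : ℕ) where
  dom : Set (OnePoint (Eucl k))
  isOpen_dom : IsOpen dom
  toFun : OnePoint (Eucl k) → Eucl n
  continuousOn : ContinuousOn toFun dom

namespace Surface

variable {n k : ℕ}

/-- The multiplicity function `N(S,y)` of a surface. -/
def mult (S : Surface n k) (y : Eucl n) : ℝ≥0∞ :=
  ((S.dom ∩ S.toFun ⁻¹' {y}).encard : ℕ∞)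

/-- The integral `∫_S ρ dA = ∫ ρ(y) N(S,y) dH^k(y)` of `ρ` over the surface `S`. -/
def sint (S : Surface n k) (ρ : Eucl n → ℝ≥0∞) : ℝ≥0∞ :=
  ∫⁻ y, ρ y * S.mult y ∂(μH[(k : ℝ)] : Measure (Eucl n))

end Surface

/-- Admissible functions for a family of `k`-surfaces. -/
def surfAdm {n : ℕ} (k : ℕ) (Γ : Set (Surface n k)) : Set (Eucl n → ℝ≥0∞) :=
  {ρ | Measurable ρ ∧ ∀ S ∈ Γ, 1 ≤ S.sint fun y => ρ y ^ k}

/-- The `p`-modulus of a family of `k`-surfaces. -/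
def surfModulus {n : ℕ} (p : ℝ) (k : ℕ) (Γ : Set (Surface n k)) : ℝ≥0∞ :=
  ⨅ ρ ∈ surfAdm k Γ, ∫⁻ x, ρ x ^ p

/-- Extensively `p`-admissible functions: admissibility may fail on a subfamily of
`p`-modulus zero. -/
def extAdm {n : ℕ} (p : ℝ) (k : ℕ) (Γ : Set (Surface n k)) : Set (Eucl n → ℝ≥0∞) :=
  {ρ | Measurable ρ ∧ surfModulus p k {S ∈ Γ | ¬ 1 ≤ S.sint fun y => ρ y ^ k} = 0}

/-- The family of the (injectively parametrized, nonempty) surfaces `S(x₀,r) ∩ D`,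
`r ∈ I`. -/
def sphereFam {n : ℕ} (D : Set (Eucl n)) (x₀ : Eucl n) (I : Set ℝ) :
    Set (Surface n (n - 1)) :=
  {S | ∃ r ∈ I, S.dom.Nonempty ∧ Set.InjOn S.toFun S.dom ∧
      S.toFun '' S.dom = sphere x₀ r ∩ D}

/-- The image of a family of surfaces under a map `f`. -/
def imageFam {n k : ℕ} (f : Eucl n → Eucl n) (Γ : Set (Surface n k)) :
    Set (Surface n k) :=
  {S' | ∃ S ∈ Γ, S'.dom = S.dom ∧ Set.EqOn S'.toFun (f ∘ S.toFun) S.dom}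

/-- The spherical ring `R(x₀,a,b)`. -/
def ringA {n : ℕ} (x₀ : Eucl n) (a b : ℝ) : Set (Eucl n) :=
  {x | a < dist x x₀ ∧ dist x x₀ < b}

/-- `‖Q‖_α(r) = (∫_{D ∩ S(x₀,r)} Q^α dA)^{1/α}`. -/
def sphNorm {n : ℕ} (D : Set (Eucl n)) (x₀ : Eucl n) (Q : Eucl n → ℝ≥0∞)
    (α : ℝ) (r : ℝ) : ℝ≥0∞ :=
  (∫⁻ x in D ∩ sphere x₀ r, Q x ^ α ∂(μH[((n : ℝ) - 1)] : Measure (Eucl n))) ^ (1 / α)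

/-- `f` is a lower `Q`-homeomorphism w.r.t. the `p`-modulus at `x₀`. -/
def IsLowerQHomeoAt {n : ℕ} (D : Set (Eucl n)) (f : Eucl n → Eucl n)
    (Q : Eucl n → ℝ≥0∞) (p : ℝ) (x₀ : Eucl n) (d₀ : ℝ≥0∞) : Prop :=
  ∀ ε ε₀ : ℝ, 0 < ε → ε < ε₀ → ENNReal.ofReal ε₀ < d₀ →
    (⨅ ρ ∈ extAdm p (n - 1) (sphereFam D x₀ (Ioo ε ε₀)),
        ∫⁻ x in ringA x₀ ε ε₀, ρ x ^ p / Q x) ≤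
      surfModulus p (n - 1) (imageFam f (sphereFam D x₀ (Ioo ε ε₀)))

/-- `f` is a homeomorphism of `D` onto `D'`. -/
structure IsHomeoOn {n : ℕ} (f : Eucl n → Eucl n) (D D' : Set (Eucl n)) : Prop where
  continuousOn : ContinuousOn f D
  injOn : Set.InjOn f D
  image_eq : f '' D = D'
  isOpenMapOn : ∀ U : Set (Eucl n), U ⊆ D → IsOpen U → IsOpen (f '' U)

/-- `Df` is the weak (Sobolev) derivative of `f` on `D`, and `f ∈ W^{1,1}_loc(D)`. -/
def IsWeakDerivOn {n m : ℕ} (D : Set (Eucl n)) (f : Eucl n → Eucl m)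
    (Df : Eucl n → Eucl n →L[ℝ] Eucl m) : Prop :=
  LocallyIntegrableOn f D volume ∧ LocallyIntegrableOn Df D volume ∧
  ∀ ψ : Eucl n → ℝ, ContDiff ℝ (⊤ : ℕ∞) ψ → HasCompactSupport ψ → tsupport ψ ⊆ D →
    ∀ v : Eucl n, ∫ x, ψ x • Df x v = - ∫ x, fderiv ℝ ψ x v • f x

/-- The Frobenius norm `|∇f| = (Σ_{i,j} (∂f_i/∂x_j)²)^{1/2}` of a linear map. -/
def frobNorm {n m : ℕ} (A : Eucl n →L[ℝ] Eucl m) : ℝ :=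
  Real.sqrt (∑ i : Fin m, ∑ j : Fin n, (A (EuclideanSpace.single j 1) i) ^ 2)

/-- The Orlicz–Sobolev class `W^{1,φ}_loc(D)` (with explicit weak derivative `Df`). -/
def MemOrliczSobolevOn {n m : ℕ} (φ : ℝ → ℝ) (D : Set (Eucl n))
    (f : Eucl n → Eucl m) (Df : Eucl n → Eucl n →L[ℝ] Eucl m) : Prop :=
  IsWeakDerivOn D f Df ∧
  ∀ K : Set (Eucl n), K ⊆ D → IsCompact K →
    (∫⁻ x in K, ENNReal.ofReal (φ (frobNorm (Df x)))) < ⊤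

/-- `φ` is nondecreasing and positive on `(0,∞)`. -/
def NondecPos (φ : ℝ → ℝ) : Prop :=
  (∀ s t : ℝ, 0 < s → s ≤ t → φ s ≤ φ t) ∧ ∀ t : ℝ, 0 < t → 0 < φ t

/-- The Calderón-type condition `∫_{t₀}^∞ (t/φ(t))^{1/(n-2)} dt < ∞`. -/
def CalderonCond (n : ℕ) (φ : ℝ → ℝ) : Prop :=
  ∃ t₀ : ℝ, 0 < t₀ ∧
    IntegrableOn (fun t => (t / φ t) ^ (1 / ((n : ℝ) - 2))) (Ioi t₀) volume

/-- `f` (with a.e. derivative `Df`) has finite distortion on `D`. -/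
def HasFiniteDistortionOn {n : ℕ} (D : Set (Eucl n))
    (Df : Eucl n → Eucl n →L[ℝ] Eucl n) : Prop :=
  ∃ K : Eucl n → ℝ, AEMeasurable K (volume.restrict D) ∧
    ∀ᵐ x ∂volume.restrict D, 1 ≤ K x ∧ ‖Df x‖ ^ n ≤ K x * (Df x).det

/-- The distortion `K_p(x,f)` for a map with derivative `Df`. -/
def distortionKp {n : ℕ} (p : ℝ) (Df : Eucl n → Eucl n →L[ℝ] Eucl n)
    (x : Eucl n) : ℝ≥0∞ :=
  if (Df x).det ≠ 0 then ENNReal.ofReal (‖Df x‖ ^ p / (Df x).det)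
  else if Df x = 0 then 1 else ⊤

/-- The multiplicity function of a curve `γ : [0,1] → ℝⁿ`. -/
def curveMult {n : ℕ} (γ : ℝ → Eucl n) (y : Eucl n) : ℝ≥0∞ :=
  (({t ∈ Icc (0:ℝ) 1 | γ t = y}).encard : ℕ∞)

/-- The line integral `∫_γ ρ ds = ∫ ρ(y) N(γ,y) dH¹(y)`. -/
def curveInt {n : ℕ} (γ : ℝ → Eucl n) (ρ : Eucl n → ℝ≥0∞) : ℝ≥0∞ :=
  ∫⁻ y, ρ y * curveMult γ y ∂(μH[(1 : ℝ)] : Measure (Eucl n))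

/-- The family of curves joining `A` and `B` in `G`. -/
def curveJoin {n : ℕ} (A B G : Set (Eucl n)) : Set (ℝ → Eucl n) :=
  {γ | ContinuousOn γ (Icc 0 1) ∧ γ 0 ∈ A ∧ γ 1 ∈ B ∧ Set.MapsTo γ (Icc 0 1) G}

/-- The `q`-modulus of a family of curves. -/
def curveModulus {n : ℕ} (q : ℝ) (Γ : Set (ℝ → Eucl n)) : ℝ≥0∞ :=
  ⨅ ρ ∈ {ρ : Eucl n → ℝ≥0∞ | Measurable ρ ∧ ∀ γ ∈ Γ, 1 ≤ curveInt γ ρ},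
    ∫⁻ x, ρ x ^ q

/-- The `q`-capacity of the condenser `(A,C)`, via the modulus of joining curves. -/
def condenserCap {n : ℕ} (q : ℝ) (A C : Set (Eucl n)) : ℝ≥0∞ :=
  curveModulus q (curveJoin (frontier A) (frontier C) (A \ C))

/-- `L(x₀,f) = limsup_{x→x₀} |f(x)-f(x₀)|/|x-x₀|`. -/
def LAt {n : ℕ} (f : Eucl n → Eucl n) (x₀ : Eucl n) : ℝ≥0∞ :=
  limsup (fun x => edist (f x) (f x₀) / edist x x₀) (𝓝[≠] x₀)

/-- `k_p(x₀) = limsup_{ε→0} (⨍_{B(x₀,ε)} K_p(x,f)^{(n-1)/(p-n+1)} dm)^{(p-n+1)/(n-1)}`. -/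
def kpAt {n : ℕ} (p : ℝ) (Df : Eucl n → Eucl n →L[ℝ] Eucl n) (x₀ : Eucl n) : ℝ≥0∞ :=
  limsup (fun ε : ℝ =>
      ((∫⁻ x in ball x₀ ε, distortionKp p Df x ^ (((n:ℝ)-1)/(p-(n:ℝ)+1))) /
        volume (ball x₀ ε)) ^ ((p-(n:ℝ)+1)/((n:ℝ)-1)))
    (𝓝[>] (0:ℝ))

/-- `f` is absolutely continuous on `S` w.r.t. `d`-dimensional Hausdorff measure. -/
def ACOnSet {n m : ℕ} (f : Eucl n → Eucl m) (S : Set (Eucl n)) (d : ℝ) : Prop :=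
  ∀ ε : ℝ, 0 < ε → ∃ δ : ℝ, 0 < δ ∧ ∀ A : Set (Eucl n), A ⊆ S →
    (μH[d] : Measure (Eucl n)) A < ENNReal.ofReal δ →
      (μH[d] : Measure (Eucl m)) (f '' A) < ENNReal.ofReal ε

/-- `f` is locally absolutely continuous on `S` w.r.t. `H^d`. -/
def LocACOnSet {n m : ℕ} (f : Eucl n → Eucl m) (S : Set (Eucl n)) (d : ℝ) : Prop :=
  ∀ x ∈ S, ∃ V ∈ 𝓝 x, ACOnSet f (S ∩ V) d

/-- The Luzin (N)-property of `f` on `S` w.r.t. `d`-dimensional Hausdorff measure. -/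
def LusinNOn {n m : ℕ} (f : Eucl n → Eucl m) (S : Set (Eucl n)) (d : ℝ) : Prop :=
  ∀ A : Set (Eucl n), A ⊆ S → (μH[d] : Measure (Eucl n)) A = 0 →
    (μH[d] : Measure (Eucl m)) (f '' A) = 0

end


/-- Weight produced from the Calderon condition. -/
theorem aux_weight (k : ℕ) (hk : 2 ≤ k) (φ : ℝ → ℝ) (hφ : NondecPos φ)
    (hcal : CalderonCond (k + 1) φ) :
    ∃ (ψ : ℝ → ℝ) (c : ℝ) (N : ℝ → ℝ≥0∞), Monotone ψ ∧ (∀ t ≤ 0, ψ t = 0) ∧ 0 ≤ c ∧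
      (∀ t, 0 < t → ψ t ≤ φ t + c) ∧ Antitone N ∧ (∀ t, 0 < t → N t ≠ 0) ∧
      (∀ t, 0 < t → N t ≠ ⊤) ∧ (∫⁻ t in Ioi (0:ℝ), N t) ≠ ⊤ ∧
      ∀ t, 0 < t → ENNReal.ofReal t * (N t) ^ (-((k : ℝ) - 1)) ≤ ENNReal.ofReal (ψ t) := by
  obtain ⟨hmono, hpos⟩ := hφ
  obtain ⟨t₀, ht₀, hint⟩ := hcal
  have hk1 : (0:ℝ) < (k:ℝ) - 1 := by
    have : (2:ℝ) ≤ k := by exact_mod_cast hk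
    linarith
  set p : ℝ := 1 / ((k:ℝ) - 1) with hp
  have hp0 : 0 < p := by positivity
  have hexp : (1 / (((k + 1 : ℕ) : ℝ) - 2)) = p := by
    rw [hp]; push_cast; congr 1; ring
  rw [hexp] at hint
  set ψ : ℝ → ℝ := fun t => if t ≤ 0 then 0 else φ (max t t₀) with hψ
  have hψpos : ∀ t, 0 < t → ψ t = φ (max t t₀) := fun t ht => by simp [hψ, not_le.2 ht]
  have hψ0 : ∀ t, 0 < t → 0 < ψ t := fun t ht => by
    rw [hψpos t ht]; exact hpos _ (lt_max_of_lt_left ht)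
  have hψm : Monotone ψ := by
    intro a b hab
    by_cases hb : b ≤ 0
    · simp [hψ, hb, hab.trans hb]
    · push Not at hb
      by_cases ha : a ≤ 0
      · have : ψ a = 0 := by simp [hψ, ha]
        rw [this]; exact (hψ0 b hb).le
      · push Not at ha
        rw [hψpos a ha, hψpos b hb]
        exact hmono _ _ (lt_max_of_lt_left ha) (max_le_max_right _ hab)
  set H : ℝ → ℝ≥0∞ := fun s => ENNReal.ofReal ((s / ψ s) ^ p) with hH
  have hHm : Measurable H := by
    have := hψm.measurable
    fun_prop
  have hHint : ∫⁻ s in Ioi (0:ℝ), H s ≠ ⊤ := by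
    rw [← Ioc_union_Ioi_eq_Ioi ht₀.le]
    refine ne_top_of_le_ne_top ?_ (lintegral_union_le _ _ _)
    refine ENNReal.add_ne_top.2 ⟨?_, ?_⟩
    · have : ∫⁻ s in Ioc 0 t₀, H s ≤ ∫⁻ s in Ioc 0 t₀, ENNReal.ofReal ((t₀ / φ t₀) ^ p) := by
        refine setLIntegral_mono' measurableSet_Ioc fun s hs => ?_
        apply ENNReal.ofReal_le_ofReal
        rw [hψpos s hs.1, max_eq_right hs.2]
        have := hpos t₀ ht₀
        have := hs.1
        have := hs.2
        gcongr
      refine ne_top_of_le_ne_top ?_ this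
      simp [ENNReal.mul_eq_top]
    · have h1 : ∫⁻ s in Ioi t₀, H s = ∫⁻ s in Ioi t₀, ENNReal.ofReal ((s / φ s) ^ p) := by
        refine setLIntegral_congr_fun measurableSet_Ioi fun s hs => ?_
        simp only [hH]
        rw [hψpos s (ht₀.trans hs), max_eq_left (le_of_lt hs)]
      rw [h1]
      exact ((lintegral_mono fun s => Real.ofReal_le_enorm _).trans_lt hint.2).ne
  set C : ℝ≥0∞ := ENNReal.ofReal (2 ^ (p + 1)) with hC
  set N : ℝ → ℝ≥0∞ := fun t => C * ∫⁻ s in Ioi (max (t / 2) 0), H s / ENNReal.ofReal s with hN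
  have hNanti : Antitone N := by
    intro a b hab
    simp only [hN]
    gcongr
  have hNge : ∀ t, 0 < t → H t ≤ N t := by
    intro t ht
    have hmx : max (t / 2) 0 = t / 2 := max_eq_left (by positivity)
    simp only [hN, hmx]
    have h1 : ∫⁻ s in Ioc (t/2) t, ENNReal.ofReal ((t / (2 * ψ t)) ^ p / t) ≤
        ∫⁻ s in Ioi (t/2), H s / ENNReal.ofReal s := by
      refine (setLIntegral_mono' measurableSet_Ioc fun s hs => ?_).trans
        (lintegral_mono_set Ioc_subset_Ioi_self)
      have hs0 : 0 < s := lt_trans (by positivity) hs.1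
      rw [hH, ← ENNReal.ofReal_div_of_pos hs0]
      apply ENNReal.ofReal_le_ofReal
      have h1 := hψ0 s hs0
      have h2 := hψ0 t ht
      have h3 := hψm hs.2
      have h4 : t / (2 * ψ t) ≤ s / ψ s := by
        rw [div_le_div_iff₀ (by positivity) h1]
        nlinarith [hs.1]
      have := hs.2
      have : 0 ≤ t / (2 * ψ t) := by positivity
      gcongr
    refine le_trans ?_ (mul_le_mul_right h1 C)
    rw [lintegral_const, Measure.restrict_apply_univ, Real.volume_Ioc, hC,
      ← ENNReal.ofReal_mul (by have := hψ0 t ht; positivity), ← ENNReal.ofReal_mul (by positivity)]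
    apply ENNReal.ofReal_le_ofReal
    apply le_of_eq
    have h2 := hψ0 t ht
    have h5 : (t / (2 * ψ t)) ^ p = (t / ψ t) ^ p / 2 ^ p := by
      rw [← Real.div_rpow (by positivity) (by norm_num)]
      congr 1; field_simp
    rw [h5, Real.rpow_add (by norm_num), Real.rpow_one]
    generalize (t / ψ t) ^ p = q
    field_simp
    ring
  have hHpos : ∀ t, 0 < t → 0 < (t / ψ t) ^ p := fun t ht => by
    have h2 := hψ0 t ht
    positivity
  refine ⟨ψ, φ t₀, N, hψm, fun t ht => by simp [hψ, ht], (hpos _ ht₀).le, ?_, hNanti, ?_, ?_, ?_, ?_⟩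
  · intro t ht
    rw [hψpos t ht]
    rcases max_cases t t₀ with h | h <;> rw [h.1]
    · linarith [hpos _ ht₀]
    · linarith [hpos _ ht]
  · intro t ht h0
    have := hNge t ht
    rw [h0, nonpos_iff_eq_zero, hH, ENNReal.ofReal_eq_zero] at this
    exact absurd (hHpos t ht) (not_lt.2 this)
  · intro t ht
    have hmx : max (t / 2) 0 = t / 2 := max_eq_left (by positivity)
    simp only [hN, hmx]
    apply ENNReal.mul_ne_top ENNReal.ofReal_ne_top
    have : ∫⁻ s in Ioi (t/2), H s / ENNReal.ofReal s ≤
        ∫⁻ s in Ioi (t/2), (ENNReal.ofReal (t/2))⁻¹ * H s := by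
      refine setLIntegral_mono' measurableSet_Ioi fun s hs => ?_
      rw [ENNReal.div_eq_inv_mul]
      gcongr
      exact le_of_lt hs
    refine ne_top_of_le_ne_top ?_ this
    rw [lintegral_const_mul _ hHm]
    refine ENNReal.mul_ne_top (by simp [ht]) (ne_top_of_le_ne_top hHint ?_)
    exact lintegral_mono_set (Ioi_subset_Ioi (by positivity))
  · simp only [hN]
    rw [lintegral_const_mul' _ _ ENNReal.ofReal_ne_top]
    apply ENNReal.mul_ne_top ENNReal.ofReal_ne_top
    have h1 : ∀ t ∈ Ioi (0:ℝ), ∫⁻ s in Ioi (max (t / 2) 0), H s / ENNReal.ofReal s =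
        ∫⁻ s in Ioi (0:ℝ), (Iio (2 * s)).indicator (fun _ => H s / ENNReal.ofReal s) t := by
      intro t ht
      have ht' : 0 < t := ht
      have hmx : max (t / 2) 0 = t / 2 := max_eq_left (by positivity)
      rw [hmx, ← lintegral_indicator measurableSet_Ioi, ← lintegral_indicator measurableSet_Ioi]
      congr 1; ext s
      simp only [indicator, mem_Ioi, mem_Iio]
      by_cases h : t / 2 < s
      · have : 0 < s := by linarith
        have : t < 2 * s := by linarith
        simp [*]
      · have : ¬ t < 2 * s := by linarith
        simp [*]
    rw [setLIntegral_congr_fun measurableSet_Ioi h1]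
    rw [lintegral_lintegral_swap]
    · have h2 : ∀ s ∈ Ioi (0:ℝ), ∫⁻ t in Ioi (0:ℝ),
          (Iio (2 * s)).indicator (fun _ => H s / ENNReal.ofReal s) t = 2 * H s := by
        intro s hs
        have hs' : 0 < s := hs
        rw [lintegral_indicator measurableSet_Iio, lintegral_const,
          Measure.restrict_apply_univ, Measure.restrict_apply measurableSet_Iio, Iio_inter_Ioi,
          Real.volume_Ioo, sub_zero, ENNReal.ofReal_mul (by norm_num)]
        have a1 : ENNReal.ofReal s ≠ 0 := by simp [hs']
        rw [mul_comm (ENNReal.ofReal 2), ← mul_assoc, ENNReal.div_mul_cancel a1 ENNReal.ofReal_ne_top]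
        simp [mul_comm]
      rw [setLIntegral_congr_fun measurableSet_Ioi h2, lintegral_const_mul _ hHm]
      exact ENNReal.mul_ne_top (by simp) hHint
    · have : (Function.uncurry fun t s => (Iio (2 * s)).indicator (fun _ => H s / ENNReal.ofReal s) t)
        = fun q : ℝ × ℝ => {q : ℝ × ℝ | q.1 < 2 * q.2}.indicator (fun q => H q.2 / ENNReal.ofReal q.2) q := by
        ext ⟨t, s⟩; simp [indicator]
      rw [this]
      apply Measurable.aemeasurable
      apply Measurable.indicator
      · fun_prop
      · exact measurableSet_lt (by fun_prop) (by fun_prop)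
  · intro t ht
    have h2 := hψ0 t ht
    have h3 : N t ^ (-((k : ℝ) - 1)) ≤ H t ^ (-((k : ℝ) - 1)) := by
      rw [ENNReal.rpow_neg, ENNReal.rpow_neg]
      have := hNge t ht
      gcongr
    refine (mul_le_mul_right h3 _).trans ?_
    rw [hH, ENNReal.ofReal_rpow_of_pos (hHpos t ht), ← ENNReal.ofReal_mul ht.le]
    apply ENNReal.ofReal_le_ofReal
    rw [← Real.rpow_mul (by positivity), show p * (-((k:ℝ) - 1)) = -1 by rw [hp]; field_simp,
      Real.rpow_neg_one]
    apply le_of_eq; field_simp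

theorem aux_holder {α : Type*} [MeasurableSpace α] (μ : Measure α) [SFinite μ]
    (k : ℕ) (hk : 2 ≤ k) (ψ : ℝ → ℝ) (N : ℝ → ℝ≥0∞)
    (hN : Antitone N) (hN0 : ∀ t, 0 < t → N t ≠ 0) (hNt : ∀ t, 0 < t → N t ≠ ⊤)
    (hNψ : ∀ t, 0 < t → ENNReal.ofReal t * (N t) ^ (-((k : ℝ) - 1)) ≤ ENNReal.ofReal (ψ t))
    (g : α → ℝ) (hg : Measurable g) :
    ∫⁻ s in Ioi (0:ℝ), (μ {z | s < g z}) ^ (1 / (k:ℝ)) ≤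
      (∫⁻ z, ENNReal.ofReal (ψ (g z)) ∂μ) ^ (1 / (k:ℝ)) *
        (∫⁻ t in Ioi (0:ℝ), N t) ^ (1 - 1 / (k:ℝ)) := by
  have hk2 : (2:ℝ) ≤ k := by exact_mod_cast hk
  have hk0 : (0:ℝ) < k := by linarith
  have hk1 : (0:ℝ) < (k:ℝ) - 1 := by linarith
  have hNm : Measurable N := hN.measurable
  set a : ℝ → ℝ≥0∞ := fun s => μ {z | s < g z} with ha
  have ham : Measurable a := by
    apply Antitone.measurable
    intro s t hst
    exact measure_mono fun z hz => lt_of_le_of_lt hst hz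
  have hpq : (k:ℝ).HolderConjugate ((k:ℝ) / ((k:ℝ) - 1)) :=
    Real.HolderConjugate.conjExponent (by linarith)
  have key := ENNReal.lintegral_mul_le_Lp_mul_Lq (volume.restrict (Ioi (0:ℝ))) hpq
    (f := fun s => (a s * N s ^ (-((k:ℝ) - 1))) ^ (1 / (k:ℝ)))
    (g := fun s => N s ^ (((k:ℝ) - 1) / k)) (by fun_prop) (by fun_prop)
  have e1 : ∫⁻ s in Ioi (0:ℝ), ((fun s => (a s * N s ^ (-((k:ℝ) - 1))) ^ (1 / (k:ℝ))) *
      (fun s => N s ^ (((k:ℝ) - 1) / k))) s = ∫⁻ s in Ioi (0:ℝ), a s ^ (1 / (k:ℝ)) := by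
    refine setLIntegral_congr_fun measurableSet_Ioi fun s hs => ?_
    simp only [Pi.mul_apply]
    rw [ENNReal.mul_rpow_of_nonneg _ _ (by positivity), ← ENNReal.rpow_mul, mul_assoc,
      ← ENNReal.rpow_add _ _ (hN0 s hs) (hNt s hs)]
    rw [show -((k:ℝ) - 1) * (1 / (k:ℝ)) + ((k:ℝ) - 1) / k = 0 by ring, ENNReal.rpow_zero, mul_one]
  have e2 : ∫⁻ s in Ioi (0:ℝ), (N s ^ (((k:ℝ) - 1) / k)) ^ ((k:ℝ) / ((k:ℝ) - 1)) =
      ∫⁻ s in Ioi (0:ℝ), N s := by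
    refine lintegral_congr fun s => ?_
    rw [← ENNReal.rpow_mul, show ((k:ℝ) - 1) / k * ((k:ℝ) / ((k:ℝ) - 1)) = 1 by field_simp,
      ENNReal.rpow_one]
  have e3 : ∫⁻ s in Ioi (0:ℝ), ((a s * N s ^ (-((k:ℝ) - 1))) ^ (1 / (k:ℝ))) ^ (k:ℝ) ≤
      ∫⁻ z, ENNReal.ofReal (ψ (g z)) ∂μ := by
    have h1 : ∀ s, ((a s * N s ^ (-((k:ℝ) - 1))) ^ (1 / (k:ℝ))) ^ (k:ℝ) =
        ∫⁻ z, {z | s < g z}.indicator (fun _ => N s ^ (-((k:ℝ) - 1))) z ∂μ := by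
      intro s
      rw [← ENNReal.rpow_mul, one_div_mul_cancel hk0.ne', ENNReal.rpow_one,
        lintegral_indicator (measurableSet_lt measurable_const hg), lintegral_const,
        Measure.restrict_apply_univ, mul_comm]
    simp_rw [h1]
    rw [lintegral_lintegral_swap]
    · refine lintegral_mono fun z => ?_
      have h2 : ∫⁻ s in Ioi (0:ℝ), {z | s < g z}.indicator (fun _ => N s ^ (-((k:ℝ) - 1))) z ≤
          ∫⁻ s in Ioc 0 (g z), N (g z) ^ (-((k:ℝ) - 1)) := by
        rw [← lintegral_indicator measurableSet_Ioi, ← lintegral_indicator measurableSet_Ioc]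
        refine lintegral_mono fun s => ?_
        simp only [indicator, mem_Ioi, mem_Ioc, mem_ofPred_eq]
        by_cases h : 0 < s
        · by_cases h' : s < g z
          · simp only [h, h', h'.le, and_self, if_true]
            rw [ENNReal.rpow_neg, ENNReal.rpow_neg]
            have := hN h'.le
            gcongr
          · simp [h, h']
        · simp [h]
      refine h2.trans ?_
      rw [lintegral_const, Measure.restrict_apply_univ, Real.volume_Ioc, sub_zero, mul_comm]
      by_cases h : 0 < g z
      · exact hNψ _ h
      · simp [ENNReal.ofReal_of_nonpos (not_lt.1 h)]
    · have : (Function.uncurry fun s z => {z | s < g z}.indicator (fun _ => N s ^ (-((k:ℝ) - 1))) z)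
        = fun q : ℝ × α => {q : ℝ × α | q.1 < g q.2}.indicator
            (fun q => N q.1 ^ (-((k:ℝ) - 1))) q := by
        ext ⟨t, s⟩; simp [indicator]
      rw [this]
      apply Measurable.aemeasurable
      apply Measurable.indicator
      · fun_prop
      · exact measurableSet_lt (by fun_prop) (by fun_prop)
  rw [e1, e2] at key
  refine key.trans ?_
  rw [show 1 / ((k:ℝ) / ((k:ℝ) - 1)) = 1 - 1 / (k:ℝ) by field_simp]
  gcongr

theorem aux_scalar (k : ℕ) (hk : 2 ≤ k) (α β : ℝ) (hα : 0 < α) (hβ : 0 ≤ β) :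
    ∫⁻ t in Ioi (0:ℝ), min (ENNReal.ofReal (α ^ k)) (ENNReal.ofReal (β ^ k / t ^ k)) ≤
      ENNReal.ofReal (2 * α ^ (k - 1) * β) := by
  obtain ⟨l, rfl⟩ : ∃ l, k = l + 2 := ⟨k - 2, by omega⟩
  rcases hβ.eq_or_lt with rfl | hβ
  · simp
  set τ := β / α with hτ
  have hτ0 : 0 < τ := by positivity
  rw [← Ioc_union_Ioi_eq_Ioi hτ0.le]
  refine (lintegral_union_le _ _ _).trans ?_
  have h1 : ∫⁻ t in Ioc 0 τ, min (ENNReal.ofReal (α ^ (l+2))) (ENNReal.ofReal (β ^ (l+2) / t ^ (l+2))) ≤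
      ENNReal.ofReal (α ^ (l + 1) * β) := by
    refine (lintegral_mono fun t => min_le_left _ _).trans ?_
    rw [lintegral_const, Measure.restrict_apply_univ, Real.volume_Ioc,
      ← ENNReal.ofReal_mul (by positivity)]
    apply ENNReal.ofReal_le_ofReal
    apply le_of_eq
    rw [hτ]; field_simp; ring
  have h2 : ∫⁻ t in Ioi τ, min (ENNReal.ofReal (α ^ (l+2))) (ENNReal.ofReal (β ^ (l+2) / t ^ (l+2))) ≤
      ENNReal.ofReal (α ^ (l + 1) * β) := by
    refine (lintegral_mono fun t => min_le_right _ _).trans ?_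
    have hneg : (-((l:ℝ)+2)) < -1 := by have : (0:ℝ) ≤ l := by positivity
                                        linarith
    have h3 : ∫⁻ t in Ioi τ, ENNReal.ofReal (β ^ (l+2) / t ^ (l+2)) =
        ∫⁻ t in Ioi τ, ENNReal.ofReal (β ^ (l+2) * t ^ (-((l:ℝ)+2))) := by
      refine setLIntegral_congr_fun measurableSet_Ioi fun t ht => ?_
      have ht0 : 0 < t := hτ0.trans ht
      rw [Real.rpow_neg ht0.le, div_eq_mul_inv]
      congr 3
      exact_mod_cast (Real.rpow_natCast t (l+2)).symm
    rw [h3, ← ofReal_integral_eq_lintegral_ofReal]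
    · apply ENNReal.ofReal_le_ofReal
      rw [integral_const_mul, integral_Ioi_rpow_of_lt hneg hτ0,
        show -((l:ℝ)+2) + 1 = -((l+1 : ℕ) : ℝ) by push_cast; ring, Real.rpow_neg hτ0.le,
        Real.rpow_natCast, neg_div_neg_eq]
      have : β ^ (l+2) * ((τ ^ (l+1))⁻¹ / ((l+1 : ℕ) : ℝ)) = (α ^ (l+1) * β) / ((l+1 : ℕ) : ℝ) := by
        rw [hτ, div_pow]; field_simp; ring
      rw [this]
      apply div_le_self (by positivity)
      push_cast; have : (0:ℝ) ≤ l := by positivity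
      linarith
    · exact ((integrableOn_Ioi_rpow_of_lt hneg hτ0).const_mul _)
    · refine (ae_restrict_iff' measurableSet_Ioi).2 (ae_of_all _ fun t ht => ?_)
      have ht0 : 0 < t := hτ0.trans ht
      simp only [Pi.zero_apply]
      positivity
  refine (add_le_add h1 h2).trans ?_
  rw [← ENNReal.ofReal_add (by positivity) (by positivity)]
  apply ENNReal.ofReal_le_ofReal
  simp only [show l + 2 - 1 = l + 1 by omega]
  linarith

theorem aux_homothety_mem {k : ℕ} {c x z : Fin k → ℝ} {ρ t : ℝ} (hx : x ∈ closedBall c ρ)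
    (hz : z ∈ closedBall c ρ) (ht : 0 ≤ t) (ht1 : t ≤ 1) : x + t • (z - x) ∈ closedBall c ρ :=
  (convex_closedBall c ρ).add_smul_sub_mem hx hz ⟨ht, ht1⟩

/-- scaling of volume -/
theorem aux_scale {k : ℕ} (x : Fin k → ℝ) (t : ℝ) (ht : 0 < t) (A : Set (Fin k → ℝ)) :
    volume ((fun z => x + t • (z - x)) '' A) = ENNReal.ofReal (t ^ k) * volume A := by
  have := Measure.addHaar_image_homothety (volume : Measure (Fin k → ℝ)) x t A
  rw [Module.finrank_fin_fun, abs_of_pos (by positivity)] at this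
  rw [← this]
  congr 1
  apply image_congr
  intro z _
  simp [AffineMap.homothety_apply, add_comm]

theorem aux_lorentz (k : ℕ) (hk : 2 ≤ k) (c x : Fin k → ℝ) (ρ : ℝ) (hρ : 0 < ρ)
    (hx : x ∈ closedBall c ρ) (g : (Fin k → ℝ) → ℝ) (hg : Measurable g) (hg0 : ∀ z, 0 ≤ g z) :
    ENNReal.ofReal (2 * ρ) * ∫⁻ t in Ioc (0:ℝ) 1, ∫⁻ z in closedBall c ρ,
        ENNReal.ofReal (g (x + t • (z - x))) ≤
      2 * volume (closedBall c ρ) *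
        ∫⁻ s in Ioi (0:ℝ), ((volume.restrict (closedBall c ρ)) {z | s < g z}) ^ (1 / (k:ℝ)) := by
  set B := closedBall c ρ with hB
  have hk0 : (0:ℝ) < k := by have : (2:ℝ) ≤ k := by exact_mod_cast hk
                             linarith
  have hvB : volume B = ENNReal.ofReal ((2 * ρ) ^ k) := by
    rw [hB, Real.volume_pi_closedBall _ hρ.le, Fintype.card_fin]
  set a : ℝ → ℝ≥0∞ := fun s => (volume.restrict B) {z | s < g z} with ha
  have ham : Measurable a := by
    apply Antitone.measurable
    intro s t hst
    exact measure_mono fun z hz => lt_of_le_of_lt hst hz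
  have haB : ∀ s, a s ≤ volume B := fun s => by
    rw [ha]; exact (measure_mono (subset_univ _)).trans (by simp)
  have hat : ∀ s, a s ≠ ⊤ := fun s => ne_top_of_le_ne_top (by rw [hvB]; simp) (haB s)
  have hmB : MeasurableSet B := measurableSet_closedBall
  have h1 : ∀ t ∈ Ioc (0:ℝ) 1, ∫⁻ z in B, ENNReal.ofReal (g (x + t • (z - x))) ≤
      ∫⁻ s in Ioi (0:ℝ), min (volume B) (a s / ENNReal.ofReal (t ^ k)) := by
    intro t ht
    have htk : 0 < t ^ k := pow_pos ht.1 k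
    rw [lintegral_eq_lintegral_meas_lt _ (ae_of_all _ fun z => hg0 _)
      (by apply Measurable.aemeasurable; fun_prop)]
    refine lintegral_mono fun s => le_min ?_ ?_
    · exact (measure_mono (subset_univ _)).trans (by simp)
    · rw [ENNReal.le_div_iff_mul_le (by simp [htk]) (by simp), mul_comm,
        Measure.restrict_apply (measurableSet_lt measurable_const (by fun_prop)),
        ← aux_scale x t ht.1]
      rw [ha]; simp only
      rw [Measure.restrict_apply (measurableSet_lt measurable_const hg)]
      apply measure_mono
      rintro _ ⟨z, ⟨hz1, hz2⟩, rfl⟩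
      exact ⟨hz1, aux_homothety_mem hx hz2 ht.1.le ht.2⟩
  have h2 : ∫⁻ t in Ioc (0:ℝ) 1, ∫⁻ z in B, ENNReal.ofReal (g (x + t • (z - x))) ≤
      ∫⁻ s in Ioi (0:ℝ), ENNReal.ofReal (2 * (2 * ρ) ^ (k - 1)) * a s ^ (1 / (k:ℝ)) := by
    refine (setLIntegral_mono' measurableSet_Ioc h1).trans ?_
    rw [lintegral_lintegral_swap (by apply Measurable.aemeasurable; fun_prop)]
    refine lintegral_mono fun s => ?_
    refine (lintegral_mono_set Ioc_subset_Ioi_self).trans ?_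
    set β : ℝ := (a s ^ (1 / (k:ℝ))).toReal with hβ
    have hβ1 : a s ^ (1 / (k:ℝ)) = ENNReal.ofReal β := by
      rw [hβ, ENNReal.ofReal_toReal]
      exact ENNReal.rpow_ne_top_of_nonneg (by positivity) (hat s)
    have hβ0 : 0 ≤ β := ENNReal.toReal_nonneg
    have hβ2 : a s = ENNReal.ofReal (β ^ k) := by
      rw [ENNReal.ofReal_pow hβ0, ← hβ1, ← ENNReal.rpow_natCast, ← ENNReal.rpow_mul,
        one_div_mul_cancel hk0.ne', ENNReal.rpow_one]
    rw [hβ1, ← ENNReal.ofReal_mul (by positivity)]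
    refine le_trans (le_of_eq ?_) (aux_scalar k hk (2 * ρ) β (by positivity) hβ0)
    refine setLIntegral_congr_fun measurableSet_Ioi fun t ht => ?_
    have ht0 : 0 < t := ht
    rw [hvB, hβ2, ENNReal.ofReal_div_of_pos (by positivity)]
  rw [lintegral_const_mul _ (by fun_prop)] at h2
  refine (mul_le_mul_right h2 _).trans ?_
  rw [← mul_assoc, ← ENNReal.ofReal_mul (by positivity), hvB]
  apply le_of_eq
  congr 1
  rw [← ENNReal.ofReal_ofNat 2, ← ENNReal.ofReal_mul (by norm_num)]
  congr 1
  obtain ⟨l, rfl⟩ : ∃ l, k = l + 1 := ⟨k - 1, by omega⟩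
  simp only [Nat.add_sub_cancel]
  ring

theorem aux_c1 {k : ℕ} {E : Type*} [NormedAddCommGroup E] [NormedSpace ℝ E]
    (Q₀ : Set (Fin k → ℝ)) (hQ : IsOpen Q₀) (c x z : Fin k → ℝ) (ρ s : ℝ)
    (hB : closedBall c ρ ⊆ Q₀) (hx : x ∈ closedBall c ρ) (hz : z ∈ closedBall c ρ)
    (hs : 0 < s) (hs1 : s ≤ 1) (G : (Fin k → ℝ) → E) (hG : ContDiffOn ℝ 1 G Q₀)
    (h : (Fin k → ℝ) → ℝ≥0∞) (hh : ∀ u ∈ Q₀, ‖fderiv ℝ G u‖ₑ ≤ h u) :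
    ‖G z - G (x + s • (z - x))‖ₑ ≤
      ∫⁻ t in Icc s 1, h (x + t • (z - x)) * ENNReal.ofReal (2 * ρ) := by
  have hmem : ∀ t ∈ Icc s 1, x + t • (z - x) ∈ Q₀ := fun t ht =>
    hB (aux_homothety_mem hx hz (hs.le.trans ht.1) ht.2)
  have hline : ContDiff ℝ 1 (fun t : ℝ => x + t • (z - x)) := by fun_prop
  have h1 := enorm_sub_le_lintegral_deriv_of_contDiffOn_Icc
    (f := fun t : ℝ => G (x + t • (z - x))) (a := s) (b := 1)
    (hG.comp hline.contDiffOn hmem) hs1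
  simp only [one_smul, add_sub_cancel] at h1
  refine h1.trans (setLIntegral_mono' measurableSet_Icc fun t ht => ?_)
  have hd : HasFDerivAt G (fderiv ℝ G (x + t • (z - x))) (x + t • (z - x)) :=
    ((hG.contDiffAt (hQ.mem_nhds (hmem t ht))).differentiableAt one_ne_zero).hasFDerivAt
  have hl : HasDerivAt (fun t : ℝ => x + t • (z - x)) (z - x) t := by
    simpa using ((hasDerivAt_id t).smul_const (z - x)).const_add x
  rw [show deriv (fun t : ℝ => G (x + t • (z - x))) t = _ from (hd.comp_hasDerivAt t hl).deriv]
  refine (ContinuousLinearMap.le_opENorm _ _).trans ?_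
  gcongr
  · exact hh _ (hmem t ht)
  · rw [← ofReal_norm]
    apply ENNReal.ofReal_le_ofReal
    rw [← dist_eq_norm]
    have h1 := mem_closedBall.1 hz
    have h2 := mem_closedBall'.1 hx
    linarith [dist_triangle z c x]

theorem aux_chain {k : ℕ} {E : Type*} [NormedAddCommGroup E] [NormedSpace ℝ E]
    (Q₀ : Set (Fin k → ℝ)) (hQ : IsOpen Q₀) (c x : Fin k → ℝ) (ρ : ℝ) (hρ : 0 < ρ)
    (hB : closedBall c ρ ⊆ Q₀) (hx : x ∈ closedBall c ρ)
    (F : (Fin k → ℝ) → E) (hF : ContinuousOn F Q₀)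
    (G : ℕ → (Fin k → ℝ) → E) (hG : ∀ j, ContDiffOn ℝ 1 (G j) Q₀)
    (hGF : TendstoUniformlyOn G F atTop Q₀)
    (g : (Fin k → ℝ) → ℝ) (hg : Measurable g) (e : ℕ → (Fin k → ℝ) → ℝ≥0∞)
    (he : ∀ j, Measurable (e j)) (L : ℝ≥0)
    (hh : ∀ j, ∀ u ∈ Q₀, ‖fderiv ℝ (G j) u‖ₑ ≤ L * (ENNReal.ofReal (g u) + e j u))
    (hel : Tendsto (fun j => ∫⁻ u in Q₀, e j u) atTop (𝓝 0)) :
    ∫⁻ z in closedBall c ρ, ‖F z - F x‖ₑ ≤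
      L * (ENNReal.ofReal (2 * ρ) * ∫⁻ t in Ioc (0:ℝ) 1, ∫⁻ z in closedBall c ρ,
        ENNReal.ofReal (g (x + t • (z - x)))) := by
  set B := closedBall c ρ with hBdef
  have hmB : MeasurableSet B := measurableSet_closedBall
  set R := (L : ℝ≥0∞) * (ENNReal.ofReal (2 * ρ) * ∫⁻ t in Ioc (0:ℝ) 1, ∫⁻ z in B,
        ENNReal.ofReal (g (x + t • (z - x)))) with hR
  set K : ℝ≥0∞ := 3 * volume B + L * ENNReal.ofReal (2 * ρ) with hK
  have hKt : K ≠ ⊤ := by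
    refine ENNReal.add_ne_top.2 ⟨ENNReal.mul_ne_top (by simp) ?_, ENNReal.mul_ne_top (by simp) ENNReal.ofReal_ne_top⟩
    exact (isCompact_closedBall c ρ).measure_lt_top.ne
  -- main estimate
  have main : ∀ η : ℝ, 0 < η → ∫⁻ z in B, ‖F z - F x‖ₑ ≤ R + ENNReal.ofReal η * K := by
    intro η hη
    have hcx : ContinuousWithinAt F B x := (hF.mono hB) x hx
    obtain ⟨δ, hδ, hδF⟩ := Metric.continuousWithinAt_iff.1 hcx η hη
    obtain ⟨s, hs0, hs1, hsδ⟩ : ∃ s : ℝ, 0 < s ∧ s ≤ 1 ∧ s * (2 * ρ) < δ := by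
      refine ⟨min 1 (δ / (4 * ρ)), by positivity, min_le_left _ _, ?_⟩
      calc min 1 (δ / (4 * ρ)) * (2 * ρ) ≤ δ / (4 * ρ) * (2 * ρ) := by
            gcongr; exact min_le_right _ _
        _ = δ / 2 := by field_simp; ring
        _ < δ := by linarith
    have hdist : ∀ z ∈ B, ‖z - x‖ ≤ 2 * ρ := fun z hz => by
      rw [← dist_eq_norm]
      have h1 := mem_closedBall.1 hz
      have h2 := mem_closedBall'.1 hx
      linarith [dist_triangle z c x]
    have hclose : ∀ z ∈ B, ‖F (x + s • (z - x)) - F x‖ ≤ η := by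
      intro z hz
      rw [← dist_eq_norm]
      refine (hδF (aux_homothety_mem hx hz hs0.le hs1) ?_).le
      rw [dist_eq_norm, add_sub_cancel_left, norm_smul, Real.norm_of_nonneg hs0.le]
      exact lt_of_le_of_lt (mul_le_mul_of_nonneg_left (hdist z hz) hs0.le) hsδ
    have hsk : 0 < s ^ k := pow_pos hs0 k
    obtain ⟨j, hj1, hj2⟩ : ∃ j, (∀ u ∈ Q₀, dist (F u) (G j u) < η) ∧
        ∫⁻ u in Q₀, e j u < ENNReal.ofReal (s ^ k * η) := by
      have h1 := Metric.tendstoUniformlyOn_iff.1 hGF η hη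
      have h2 := hel.eventually (gt_mem_nhds (show (0:ℝ≥0∞) < ENNReal.ofReal (s ^ k * η) by
        simp; positivity))
      exact (h1.and h2).exists
    have hpt : ∀ z ∈ B, ‖F z - F x‖ₑ ≤ ENNReal.ofReal (3 * η) +
        ∫⁻ t in Icc s 1, (L * (ENNReal.ofReal (g (x + t • (z - x))) + e j (x + t • (z - x)))) *
          ENNReal.ofReal (2 * ρ) := by
      intro z hz
      have h1 := aux_c1 Q₀ hQ c x z ρ s hB hx hz hs0 hs1 (G j) (hG j) _ (hh j)
      refine le_trans ?_ (add_le_add_right h1 _)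
      rw [← ofReal_norm, ← ofReal_norm,
        ← ENNReal.ofReal_add (by positivity) (by positivity)]
      apply ENNReal.ofReal_le_ofReal
      have a1 := hclose z hz
      have a2 := (hj1 z (hB hz)).le
      have a3 := (hj1 _ (hB (aux_homothety_mem hx hz hs0.le hs1))).le
      rw [dist_eq_norm] at a2
      rw [dist_comm, dist_eq_norm] at a3
      have : F z - F x = (F z - G j z) + (G j z - G j (x + s • (z - x))) +
        (G j (x + s • (z - x)) - F (x + s • (z - x))) + (F (x + s • (z - x)) - F x) := by abel
      rw [this]
      refine (norm_add_le _ _).trans ?_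
      refine (add_le_add_left (norm_add_le _ _) _).trans ?_
      refine (add_le_add_left (add_le_add_left (norm_add_le _ _) _) _).trans ?_
      linarith
    have hej := he j
    have hI : ∀ t ∈ Icc s 1, ∫⁻ z in B, e j (x + t • (z - x)) ≤ ENNReal.ofReal η := by
      intro t ht
      have ht0 : 0 < t := hs0.trans_le ht.1
      set T : (Fin k → ℝ) → (Fin k → ℝ) := fun z => x + t • (z - x) with hT
      have hTm : Measurable T := by fun_prop
      have hle : Measure.map T (volume.restrict B) ≤ ENNReal.ofReal ((t ^ k)⁻¹) • volume.restrict Q₀ := by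
        refine Measure.le_iff.2 fun A hA => ?_
        rw [Measure.map_apply hTm hA, Measure.restrict_apply (hTm hA), Measure.smul_apply,
          Measure.restrict_apply hA, smul_eq_mul]
        have h1 := aux_scale x t ht0 (T ⁻¹' A ∩ B)
        have h2 : volume (T '' (T ⁻¹' A ∩ B)) ≤ volume (A ∩ Q₀) := by
          apply measure_mono
          rintro _ ⟨z, ⟨hz1, hz2⟩, rfl⟩
          exact ⟨hz1, hB (aux_homothety_mem hx hz2 ht0.le ht.2)⟩
        have h3 : volume (T ⁻¹' A ∩ B) = ENNReal.ofReal ((t ^ k)⁻¹) * volume (T '' (T ⁻¹' A ∩ B)) := by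
          rw [h1, ← mul_assoc, ← ENNReal.ofReal_mul (by positivity),
            inv_mul_cancel₀ (by positivity)]
          simp
        rw [h3]
        gcongr
      calc ∫⁻ z in B, e j (T z) = ∫⁻ u, e j u ∂(Measure.map T (volume.restrict B)) :=
            (lintegral_map hej hTm).symm
        _ ≤ ∫⁻ u, e j u ∂(ENNReal.ofReal ((t ^ k)⁻¹) • volume.restrict Q₀) :=
            lintegral_mono' hle le_rfl
        _ = ENNReal.ofReal ((t ^ k)⁻¹) * ∫⁻ u in Q₀, e j u := by
            rw [lintegral_smul_measure, smul_eq_mul]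
        _ ≤ ENNReal.ofReal ((s ^ k)⁻¹) * ENNReal.ofReal (s ^ k * η) := by
            have := ht.1
            gcongr
        _ = ENNReal.ofReal η := by
            rw [← ENNReal.ofReal_mul (by positivity)]
            congr 1; field_simp
    calc ∫⁻ z in B, ‖F z - F x‖ₑ ≤ ∫⁻ z in B, (ENNReal.ofReal (3 * η) +
        ∫⁻ t in Icc s 1, (L * (ENNReal.ofReal (g (x + t • (z - x))) + e j (x + t • (z - x)))) *
          ENNReal.ofReal (2 * ρ)) := setLIntegral_mono' hmB hpt
      _ = ENNReal.ofReal (3 * η) * volume B + ∫⁻ z in B, ∫⁻ t in Icc s 1,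
          (L * (ENNReal.ofReal (g (x + t • (z - x))) + e j (x + t • (z - x)))) *
          ENNReal.ofReal (2 * ρ) := by
        rw [lintegral_add_left measurable_const, lintegral_const, Measure.restrict_apply_univ]
      _ = ENNReal.ofReal (3 * η) * volume B + ∫⁻ t in Icc s 1, ∫⁻ z in B,
          (L * (ENNReal.ofReal (g (x + t • (z - x))) + e j (x + t • (z - x)))) *
          ENNReal.ofReal (2 * ρ) := by
        rw [lintegral_lintegral_swap]
        apply Measurable.aemeasurable
        fun_prop
      _ ≤ ENNReal.ofReal (3 * η) * volume B + ∫⁻ t in Icc s 1, (L * ENNReal.ofReal (2 * ρ)) *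
          ((∫⁻ z in B, ENNReal.ofReal (g (x + t • (z - x)))) + ENNReal.ofReal η) := by
        refine add_le_add_right ?_ _
        refine setLIntegral_mono' measurableSet_Icc fun t ht => ?_
        rw [lintegral_mul_const _ (by fun_prop), lintegral_const_mul _ (by fun_prop),
          lintegral_add_left (by fun_prop), mul_right_comm]
        gcongr
        exact hI t ht
      _ ≤ R + ENNReal.ofReal η * K := by
        rw [lintegral_const_mul' _ _ (ENNReal.mul_ne_top (by simp) ENNReal.ofReal_ne_top),
          lintegral_add_right _ measurable_const, lintegral_const, Measure.restrict_apply_univ,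
          Real.volume_Icc]
        have a1 : ∫⁻ t in Icc s 1, ∫⁻ z in B, ENNReal.ofReal (g (x + t • (z - x))) ≤
            ∫⁻ t in Ioc (0:ℝ) 1, ∫⁻ z in B, ENNReal.ofReal (g (x + t • (z - x))) :=
          lintegral_mono_set fun t ht => ⟨hs0.trans_le ht.1, ht.2⟩
        have a2 : ENNReal.ofReal (1 - s) ≤ 1 := by
          rw [ENNReal.ofReal_le_one]; linarith
        calc _ ≤ ENNReal.ofReal (3 * η) * volume B + L * ENNReal.ofReal (2 * ρ) *
              ((∫⁻ t in Ioc (0:ℝ) 1, ∫⁻ z in B, ENNReal.ofReal (g (x + t • (z - x)))) +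
                ENNReal.ofReal η * 1) := by gcongr
          _ = R + ENNReal.ofReal η * K := by
            rw [hR, hK, ENNReal.ofReal_mul (by norm_num : (0:ℝ) ≤ 3), ENNReal.ofReal_ofNat]
            ring
  refine ge_of_tendsto (x := 𝓝[>] (0:ℝ)) (f := fun η : ℝ => R + ENNReal.ofReal η * K) ?_
    (by filter_upwards [self_mem_nhdsWithin] with η hη using main η hη)
  have h0 : Tendsto (fun η : ℝ => ENNReal.ofReal η * K) (𝓝[>] (0:ℝ)) (𝓝 (0 * K)) := by
    apply ENNReal.Tendsto.mul_const
    · have := (ENNReal.continuous_ofReal.tendsto (0:ℝ)).mono_left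
        (nhdsWithin_le_nhds (s := Ioi 0))
      simpa using this
    · right; exact hKt
  simpa using h0.const_add R

theorem aux_osc {k : ℕ} (hk : 2 ≤ k) {E : Type*} [NormedAddCommGroup E] [NormedSpace ℝ E]
    (ψ : ℝ → ℝ) (N : ℝ → ℝ≥0∞)
    (hN : Antitone N) (hN0 : ∀ t, 0 < t → N t ≠ 0) (hNt : ∀ t, 0 < t → N t ≠ ⊤)
    (hNψ : ∀ t, 0 < t → ENNReal.ofReal t * (N t) ^ (-((k : ℝ) - 1)) ≤ ENNReal.ofReal (ψ t))
    (Q₀ : Set (Fin k → ℝ)) (hQ : IsOpen Q₀)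
    (F : (Fin k → ℝ) → E) (hF : ContinuousOn F Q₀)
    (G : ℕ → (Fin k → ℝ) → E) (hG : ∀ j, ContDiffOn ℝ 1 (G j) Q₀)
    (hGF : TendstoUniformlyOn G F atTop Q₀)
    (g : (Fin k → ℝ) → ℝ) (hg : Measurable g) (hg0 : ∀ z, 0 ≤ g z)
    (e : ℕ → (Fin k → ℝ) → ℝ≥0∞)
    (he : ∀ j, Measurable (e j)) (L : ℝ≥0)
    (hh : ∀ j, ∀ u ∈ Q₀, ‖fderiv ℝ (G j) u‖ₑ ≤ L * (ENNReal.ofReal (g u) + e j u))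
    (hel : Tendsto (fun j => ∫⁻ u in Q₀, e j u) atTop (𝓝 0))
    (c : Fin k → ℝ) (ρ : ℝ) (hρ : 0 < ρ) (hB : closedBall c ρ ⊆ Q₀) :
    (ediam (F '' closedBall c ρ)) ^ (k:ℝ) ≤
      ((4 * L) ^ (k:ℝ) * (∫⁻ t in Ioi (0:ℝ), N t) ^ ((k:ℝ) - 1)) *
        ∫⁻ z in closedBall c ρ, ENNReal.ofReal (ψ (g z)) := by
  have hk0 : (0:ℝ) < k := by have : (2:ℝ) ≤ k := by exact_mod_cast hk
                             linarith
  set B := closedBall c ρ with hBdef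
  set I := ∫⁻ s in Ioi (0:ℝ), ((volume.restrict B) {z | s < g z}) ^ (1 / (k:ℝ)) with hI
  have hvt : volume B ≠ ⊤ := (isCompact_closedBall c ρ).measure_lt_top.ne
  have hv0 : volume B ≠ 0 := (measure_closedBall_pos volume c hρ).ne'
  have h1 : ∀ x ∈ B, ∫⁻ z in B, ‖F z - F x‖ₑ ≤ L * (2 * volume B * I) := fun x hx =>
    (aux_chain Q₀ hQ c x ρ hρ hB hx F hF G hG hGF g hg e he L hh hel).trans
      (mul_le_mul_right (aux_lorentz k hk c x ρ hρ hx g hg hg0) _)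
  have h2 : ∀ x ∈ B, ∀ y ∈ B, edist (F x) (F y) ≤ 4 * L * I := by
    intro x hx y hy
    have h3 : edist (F x) (F y) * volume B ≤ (4 * L * I) * volume B := by
      calc edist (F x) (F y) * volume B = ∫⁻ z in B, edist (F x) (F y) := by simp
        _ ≤ ∫⁻ z in B, (‖F z - F x‖ₑ + ‖F z - F y‖ₑ) := by
          refine lintegral_mono fun z => ?_
          rw [← edist_eq_enorm_sub, ← edist_eq_enorm_sub, edist_comm (F z) (F x)]
          exact edist_triangle _ _ _
        _ = (∫⁻ z in B, ‖F z - F x‖ₑ) + ∫⁻ z in B, ‖F z - F y‖ₑ := by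
          refine lintegral_add_left' ?_ _
          have : ContinuousOn (fun z => ‖F z - F x‖ₑ) B :=
            ((hF.mono hB).sub continuousOn_const).enorm
          exact this.aemeasurable measurableSet_closedBall
        _ ≤ L * (2 * volume B * I) + L * (2 * volume B * I) := add_le_add (h1 x hx) (h1 y hy)
        _ = (4 * L * I) * volume B := by ring
    exact (ENNReal.mul_le_mul_iff_left hv0 hvt).1 h3
  have h3 : ediam (F '' B) ≤ 4 * L * I := by
    apply ediam_image_le_iff.2 
    exact h2
  have h4 := aux_holder (volume.restrict B) k hk ψ N hN hN0 hNt hNψ g hg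
  have h5 : I ^ (k:ℝ) ≤ (∫⁻ z in B, ENNReal.ofReal (ψ (g z))) *
      (∫⁻ t in Ioi (0:ℝ), N t) ^ ((k:ℝ) - 1) := by
    refine (ENNReal.rpow_le_rpow h4 hk0.le).trans (le_of_eq ?_)
    rw [ENNReal.mul_rpow_of_nonneg _ _ hk0.le, ← ENNReal.rpow_mul, ← ENNReal.rpow_mul,
      one_div_mul_cancel hk0.ne', ENNReal.rpow_one]
    congr 2; field_simp
  calc ediam (F '' B) ^ (k:ℝ) ≤ (4 * L * I) ^ (k:ℝ) := by gcongr
    _ = (4 * L) ^ (k:ℝ) * I ^ (k:ℝ) := ENNReal.mul_rpow_of_nonneg _ _ hk0.le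
    _ ≤ (4 * L) ^ (k:ℝ) * ((∫⁻ z in B, ENNReal.ofReal (ψ (g z))) *
      (∫⁻ t in Ioi (0:ℝ), N t) ^ ((k:ℝ) - 1)) := by gcongr
    _ = _ := by ring

theorem aux_hausdorff {k : ℕ} {E : Type*} [MetricSpace E] [MeasurableSpace E] [BorelSpace E]
    (Q₀ : Set (Fin k → ℝ)) (hQ : IsOpen Q₀)
    (F : (Fin k → ℝ) → E) (hF : ContinuousOn F Q₀) (μ : Measure (Fin k → ℝ)) [IsFiniteMeasure μ]
    (C : ℝ≥0∞) (hC : C ≠ ⊤)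
    (h : ∀ c ρ, 0 < ρ → closedBall c ρ ⊆ Q₀ → ediam (F '' closedBall c ρ) ^ (k:ℝ) ≤
      C * μ (closedBall c ρ)) (A : Set (Fin k → ℝ)) (hA : A ⊆ Q₀) :
    (μH[(k:ℝ)] : Measure E) (F '' A) ≤ C * μ A := by
  have key : ∀ j : ℕ, ∃ (t : Set (Fin k → ℝ)) (r : (Fin k → ℝ) → ℝ), t.Countable ∧ t ⊆ A ∧
      (∀ x ∈ t, r x ∈ {ρ : ℝ | 0 < ρ ∧ closedBall x ρ ⊆ Q₀ ∧
        ediam (F '' closedBall x ρ) ≤ ((j:ℝ≥0∞) + 1)⁻¹}) ∧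
      (A ⊆ ⋃ x ∈ t, closedBall x (r x)) ∧
      (∑' x : t, μ (closedBall x (r x))) ≤ μ A + ((j:ℝ≥0∞) + 1)⁻¹ := by
    intro j
    have hj0 : ((j:ℝ≥0∞) + 1)⁻¹ ≠ 0 := by simp
    refine Besicovitch.exists_closedBall_covering_tsum_measure_le μ hj0 
      (fun x => {ρ : ℝ | 0 < ρ ∧ closedBall x ρ ⊆ Q₀ ∧
        ediam (F '' closedBall x ρ) ≤ ((j:ℝ≥0∞) + 1)⁻¹}) A ?_
    intro x hx δ hδ
    have hx' := hQ.mem_nhds (hA hx)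
    have hc : ContinuousAt F x := hF.continuousAt hx'
    have hpos : (0:ℝ≥0∞) < ((j:ℝ≥0∞) + 1)⁻¹ / 2 := by
      simp [ENNReal.div_pos_iff]
    have hev : ∀ᶠ y in 𝓝 x, y ∈ Q₀ ∧ edist (F y) (F x) ≤ ((j:ℝ≥0∞) + 1)⁻¹ / 2 := by
      refine (eventually_mem_set.2 hx').and ?_
      filter_upwards [hc.eventually (Metric.eball_mem_nhds (F x) hpos)] with y hy
      exact le_of_lt hy
    obtain ⟨ρ, hρ, hρs⟩ := Metric.nhds_basis_closedBall.eventually_iff.1 hev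
    refine ⟨min ρ (δ / 2), ⟨by positivity, fun y hy => (hρs (closedBall_subset_closedBall
      (min_le_left _ _) hy)).1, ?_⟩, by positivity, ?_⟩
    · apply ediam_image_le_iff.2
      intro y hy z hz
      have hy' := (hρs (closedBall_subset_closedBall (min_le_left _ _) hy)).2
      have hz' := (hρs (closedBall_subset_closedBall (min_le_left _ _) hz)).2
      refine (edist_triangle_right _ _ (F x)).trans ((add_le_add hy' hz').trans ?_)
      rw [ENNReal.add_halves]
    · exact (min_le_right _ _).trans_lt (by linarith)
  choose t r ht1 ht2 ht3 ht4 ht5 using key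
  have : ∀ j, Countable (t j) := fun j => (ht1 j).to_subtype
  have hlim : Tendsto (fun j : ℕ => ((j:ℝ≥0∞) + 1)⁻¹) atTop (𝓝 0) := by
    have := (tendsto_add_atTop_iff_nat 1).2 ENNReal.tendsto_inv_nat_nhds_zero
    simpa using this
  have hH := Measure.hausdorffMeasure_le_liminf_tsum (ι := fun j => t j) (k:ℝ) (F '' A) (l := atTop)
    (fun j : ℕ => ((j:ℝ≥0∞) + 1)⁻¹) hlim (fun j x => F '' closedBall x (r j x))
    (Eventually.of_forall fun j x => (ht3 j x x.2).2.2)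
    (Eventually.of_forall fun j => by
      rintro _ ⟨a, ha, rfl⟩
      obtain ⟨x, hx, hax⟩ := mem_iUnion₂.1 (ht4 j ha)
      exact mem_iUnion.2 ⟨⟨x, hx⟩, a, hax, rfl⟩)
  refine hH.trans ?_
  have hlim2 : Tendsto (fun j : ℕ => C * (μ A + ((j:ℝ≥0∞) + 1)⁻¹)) atTop (𝓝 (C * (μ A + 0))) :=
    ENNReal.Tendsto.const_mul (hlim.const_add _) (Or.inr hC)
  rw [add_zero] at hlim2
  rw [← hlim2.liminf_eq]
  refine liminf_le_liminf (Eventually.of_forall fun j => ?_)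
  calc ∑' x : t j, ediam (F '' closedBall (x : Fin k → ℝ) (r j x)) ^ (k:ℝ) ≤
      ∑' x : t j, C * μ (closedBall (x : Fin k → ℝ) (r j x)) :=
        ENNReal.tsum_le_tsum fun x => h _ _ (ht3 j x x.2).1 (ht3 j x x.2).2.1
    _ = C * ∑' x : t j, μ (closedBall (x : Fin k → ℝ) (r j x)) := ENNReal.tsum_mul_left
    _ ≤ _ := by gcongr; exact ht5 j

theorem aux_transl {n : ℕ} {E : Type*} [NormedAddCommGroup E] [NormedSpace ℝ E]
    (D : Eucl n → E) (hD : Integrable D volume) (ε : ℝ≥0∞) (hε : ε ≠ 0) (hεt : ε ≠ ⊤) :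
    ∃ δ : ℝ, 0 < δ ∧ ∀ t : Eucl n, ‖t‖ < δ → ∫⁻ x, ‖D (x - t) - D x‖ₑ ≤ ε := by
  have hε3 : ε / 3 ≠ 0 := by simp [hε]
  obtain ⟨g, hgc, hgD, hgcont, hgint⟩ := hD.exists_hasCompactSupport_lintegral_sub_le hε3
  set S := cthickening 1 (tsupport g) with hS
  have hSc : IsCompact S := IsCompact.cthickening hgc
  have hSm : MeasurableSet S := hSc.isClosed.measurableSet
  have hSv : volume S ≠ ⊤ := hSc.measure_lt_top.ne
  obtain ⟨η, hη0, hη⟩ : ∃ η : ℝ≥0, 0 < η ∧ (η : ℝ≥0∞) * volume S ≤ ε / 3 := by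
    by_cases h0 : volume S = 0
    · exact ⟨1, one_pos, by simp [h0]⟩
    · have h1 : ε / 3 / volume S ≠ 0 := by simp [hε, hSv]
      have h2 : ε / 3 / volume S ≠ ⊤ := by
        refine ENNReal.div_ne_top (ENNReal.div_ne_top hεt (by simp)) h0
      refine ⟨(ε / 3 / volume S).toNNReal, ENNReal.toNNReal_pos h1 h2, ?_⟩
      rw [ENNReal.coe_toNNReal h2]
      exact (ENNReal.div_mul_cancel h0 hSv).le
  have huc : UniformContinuous g := hgc.uniformContinuous_of_continuous hgcont
  obtain ⟨δ, hδ, hδg⟩ := Metric.uniformContinuous_iff.1 huc η hη0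
  refine ⟨min δ 1, by positivity, fun t ht => ?_⟩
  have ht1 : ‖t‖ < δ := ht.trans_le (min_le_left _ _)
  have ht2 : ‖t‖ < 1 := ht.trans_le (min_le_right _ _)
  have hpt : ∀ x, ‖g (x - t) - g x‖ₑ ≤ S.indicator (fun _ => (η : ℝ≥0∞)) x := by
    intro x
    by_cases hx : x ∈ S
    · rw [indicator_of_mem hx]
      have := hδg (a := x - t) (b := x) (by simpa [dist_eq_norm] using ht1)
      rw [dist_eq_norm] at this
      rw [← ofReal_norm, ← ENNReal.ofReal_coe_nnreal]
      exact ENNReal.ofReal_le_ofReal this.le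
    · rw [indicator_of_notMem hx]
      have hx1 : g x = 0 := by
        by_contra h
        exact hx (self_subset_cthickening _ (subset_tsupport g h))
      have hx2 : g (x - t) = 0 := by
        by_contra h
        refine hx ?_
        refine mem_cthickening_of_dist_le x (x - t) 1 _ (subset_tsupport g h) ?_
        simpa [dist_eq_norm] using ht2.le
      simp [hx1, hx2]
  have hmD := hD.aestronglyMeasurable
  have hmg := hgcont.aestronglyMeasurable (μ := (volume : Measure (Eucl n)))
  have hm1 : AEMeasurable (fun x => ‖D x - g x‖ₑ) volume := (hmD.sub hmg).enorm
  calc ∫⁻ x, ‖D (x - t) - D x‖ₑ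
      ≤ ∫⁻ x, (‖D x - g x‖ₑ + (‖g (x - t) - g x‖ₑ + ‖D (x - t) - g (x - t)‖ₑ)) := by
        refine lintegral_mono fun x => ?_
        have : D (x - t) - D x = -(D x - g x) + ((g (x - t) - g x) + (D (x - t) - g (x - t))) := by
          abel
        rw [this]
        refine (enorm_add_le _ _).trans ?_
        rw [enorm_neg]
        gcongr
        exact enorm_add_le _ _
    _ = (∫⁻ x, ‖D x - g x‖ₑ) + ((∫⁻ x, ‖g (x - t) - g x‖ₑ) + ∫⁻ x, ‖D (x - t) - g (x - t)‖ₑ) := by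
        rw [lintegral_add_left' hm1, lintegral_add_left]
        have : Continuous fun x => ‖g (x - t) - g x‖ₑ := by fun_prop
        exact this.measurable
    _ ≤ ε / 3 + (ε / 3 + ε / 3) := by
        gcongr
        · refine (lintegral_mono hpt).trans ?_
          rw [lintegral_indicator hSm]
          simpa using hη
        · rw [lintegral_sub_right_eq_self (fun x => ‖D x - g x‖ₑ) t]
          exact hgD
    _ = ε := by
        rw [← add_assoc, ENNReal.add_thirds]

theorem aux_moll_deriv {n m : ℕ} (x1 : Eucl n) (R : ℝ) (hR : 0 < R)
    (f : Eucl n → Eucl m) (hf : Integrable f volume)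
    (D : Eucl n → Eucl n →L[ℝ] Eucl m) (hD : Integrable D volume)
    (hw : ∀ ψ : Eucl n → ℝ, ContDiff ℝ (⊤ : ℕ∞) ψ → HasCompactSupport ψ →
      tsupport ψ ⊆ closedBall x1 (2 * R) →
      ∀ v : Eucl n, ∫ x, ψ x • D x v = - ∫ x, fderiv ℝ ψ x v • f x)
    (η : ContDiffBump (0 : Eucl n)) (hη : η.rOut ≤ R) (x : Eucl n) (hx : x ∈ closedBall x1 R) :
    fderiv ℝ (convolution (η.normed volume) f (ContinuousLinearMap.lsmul ℝ ℝ) volume) x =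
      ∫ t, η.normed volume t • D (x - t) := by
  have hcs := η.hasCompactSupport_normed (μ := (volume : Measure (Eucl n)))
  have hcd : ContDiff ℝ (⊤ : ℕ∞) (η.normed (volume : Measure (Eucl n))) := η.contDiff_normed
  have hcd1 : ContDiff ℝ 1 (η.normed (volume : Measure (Eucl n))) := hcd.of_le (by simp)
  rw [(hcs.hasFDerivAt_convolution_left (ContinuousLinearMap.lsmul ℝ ℝ) hcd1
    hf.locallyIntegrable x).fderiv]
  have hcont := hcd1.continuous_fderiv one_ne_zero
  have hex := (hcs.fderiv ℝ).convolutionExists_left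
    ((ContinuousLinearMap.lsmul ℝ ℝ).precompL (Eucl n)) hcont hf.locallyIntegrable x
  have hex2 := hcs.convolutionExists_left
    (ContinuousLinearMap.lsmul ℝ ℝ) hcd1.continuous hD.locallyIntegrable x
  have hint2 : Integrable (fun t => η.normed volume t • D (x - t)) volume := hex2.integrable
  ext1 v
  rw [convolution_eq_swap, ContinuousLinearMap.integral_apply hex.integrable_swap,
    ContinuousLinearMap.integral_apply hint2]
  set ψ : Eucl n → ℝ := fun y => η.normed volume (x - y) with hψ
  have hψd : ContDiff ℝ (⊤ : ℕ∞) ψ := hcd.comp (contDiff_const.sub contDiff_id)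
  have hsub : Function.support ψ ⊆ closedBall x R := by
    intro y hy
    have : x - y ∈ Function.support (η.normed (volume : Measure (Eucl n))) := hy
    rw [η.support_normed_eq, mem_ball_zero_iff] at this
    rw [mem_closedBall, dist_comm, dist_eq_norm]
    linarith
  have hts : tsupport ψ ⊆ closedBall x R := closure_minimal hsub isClosed_closedBall
  have hcψ : HasCompactSupport ψ :=
    (isCompact_closedBall x R).of_isClosed_subset (isClosed_tsupport _) hts
  have hts2 : tsupport ψ ⊆ closedBall x1 (2 * R) := hts.trans (by
    refine closedBall_subset_closedBall' ?_
    rw [mem_closedBall] at hx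
    linarith)
  have hfd : ∀ y, fderiv ℝ ψ y v = - fderiv ℝ (η.normed volume) (x - y) v := by
    intro y
    have h1 : HasFDerivAt (η.normed volume) (fderiv ℝ (η.normed volume) (x - y)) (x - y) :=
      (hcd1.differentiable one_ne_zero _).hasFDerivAt
    have h2 : HasFDerivAt (fun y : Eucl n => x - y) (-(ContinuousLinearMap.id ℝ (Eucl n))) y :=
      (hasFDerivAt_id y).const_sub x
    have h3 : HasFDerivAt ψ _ y := h1.comp y h2
    rw [h3.fderiv]
    simp
  have h := hw ψ hψd hcψ hts2 v
  simp only [hfd, neg_smul, integral_neg, neg_neg] at h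
  have h3 : ∫ t, (η.normed volume t • D (x - t)) v = ∫ y, ψ y • D y v := by
    rw [← integral_sub_left_eq_self (fun y => ψ y • D y v) volume x]
    simp [hψ]
  rw [h3, h]
  rfl

theorem aux_moll_est {n m : ℕ} 
    (D : Eucl n → Eucl n →L[ℝ] Eucl m) (hD : Integrable D volume) (hDs : StronglyMeasurable D)
    (ε : ℝ≥0∞) (δ : ℝ)
    (hδ : ∀ t : Eucl n, ‖t‖ < δ → ∫⁻ x, ‖D (x - t) - D x‖ₑ ≤ ε)
    (η : ContDiffBump (0 : Eucl n)) (hη : η.rOut ≤ δ) :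
    ∫⁻ x, ‖(∫ t, η.normed volume t • D (x - t)) - D x‖ₑ ≤ ε := by
  have hcs := η.hasCompactSupport_normed (μ := (volume : Measure (Eucl n)))
  have hcont : Continuous (η.normed (volume : Measure (Eucl n))) := η.continuous_normed
  have hpt : ∀ x, ‖(∫ t, η.normed volume t • D (x - t)) - D x‖ₑ ≤
      ∫⁻ t, ‖η.normed volume t‖ₑ * ‖D (x - t) - D x‖ₑ := by
    intro x
    have hex2 : Integrable (fun t => η.normed volume t • D (x - t)) volume :=
      (hcs.convolutionExists_left
        (ContinuousLinearMap.lsmul ℝ ℝ) hcont hD.locallyIntegrable x).integrable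
    have h1 : D x = ∫ t, η.normed volume t • D x := by
      rw [η.integral_normed_smul]
    have hi : Integrable (fun t => η.normed volume t • D x) volume :=
      η.integrable_normed.smul_const _
    conv_lhs => rw [h1]
    rw [← integral_sub hex2 hi]
    refine (enorm_integral_le_lintegral_enorm _).trans (lintegral_mono fun t => ?_)
    rw [← enorm_smul, smul_sub]
  have hm : Measurable (fun p : Eucl n × Eucl n => ‖η.normed volume p.2‖ₑ * ‖D (p.1 - p.2) - D p.1‖ₑ) := by
    refine Measurable.fun_mul ?_ ?_
    · exact (hcont.measurable.comp measurable_snd).enorm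
    · refine StronglyMeasurable.enorm ?_
      exact (hDs.comp_measurable (measurable_fst.sub measurable_snd)).sub
        (hDs.comp_measurable measurable_fst)
  calc _ ≤ ∫⁻ x, ∫⁻ t, ‖η.normed volume t‖ₑ * ‖D (x - t) - D x‖ₑ := lintegral_mono hpt
    _ = ∫⁻ t, ∫⁻ x, ‖η.normed volume t‖ₑ * ‖D (x - t) - D x‖ₑ :=
        lintegral_lintegral_swap hm.aemeasurable
    _ ≤ ∫⁻ t, ‖η.normed (volume : Measure (Eucl n)) t‖ₑ * ε := by
        refine lintegral_mono fun t => ?_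
        rw [lintegral_const_mul' _ _ enorm_ne_top]
        by_cases ht : t ∈ ball (0 : Eucl n) η.rOut
        · gcongr
          exact hδ t (by rw [mem_ball_zero_iff] at ht; linarith)
        · rw [← η.support_normed_eq (μ := volume)] at ht
          simp only [Function.mem_support, not_not] at ht
          simp [ht]
    _ = ε := by
        rw [lintegral_mul_const _ hcont.measurable.enorm]
        have : ∫⁻ t, ‖η.normed (volume : Measure (Eucl n)) t‖ₑ = 1 := by
          have := ofReal_integral_eq_lintegral_ofReal (η.integrable_normed (μ := (volume : Measure (Eucl n))))
            (ae_of_all _ η.nonneg_normed)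
          rw [η.integral_normed, ENNReal.ofReal_one] at this
          rw [this]
          refine lintegral_congr fun t => ?_
          rw [Real.enorm_eq_ofReal (η.nonneg_normed t)]
        rw [this, one_mul]

set_option maxHeartbeats 1000000 in
theorem aux_approx {n m : ℕ} (U : Set (Eucl n)) 
    (f : Eucl n → Eucl m) (Df : Eucl n → Eucl n →L[ℝ] Eucl m)
    (hf : ContinuousOn f U) (hw : IsWeakDerivOn U f Df)
    (x1 : Eucl n) (R : ℝ) (hR : 0 < R) (hB : closedBall x1 (2 * R) ⊆ U) :
    ∃ (fj : ℕ → Eucl n → Eucl m) (D : Eucl n → Eucl n →L[ℝ] Eucl m),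
      StronglyMeasurable D ∧ Integrable D volume ∧
      (∀ᵐ x ∂(volume.restrict (closedBall x1 R)), D x = Df x) ∧
      (∀ j, ContDiff ℝ 1 (fj j)) ∧ TendstoUniformlyOn fj f atTop (closedBall x1 R) ∧
      Tendsto (fun j => ∫⁻ x in closedBall x1 R, ‖fderiv ℝ (fj j) x - D x‖ₑ) atTop (𝓝 0) := by
  set K := closedBall x1 (2 * R) with hK
  have hKm : MeasurableSet K := isClosed_closedBall.measurableSet
  have hKc : IsCompact K := isCompact_closedBall _ _
  have hfK : IntegrableOn f K volume := hw.1.integrableOn_compact_subset hB hKc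
  have hDK : IntegrableOn Df K volume := hw.2.1.integrableOn_compact_subset hB hKc
  have hfi : Integrable (K.indicator f) volume := (integrable_indicator_iff hKm).2 hfK
  have hDi : Integrable (K.indicator Df) volume := by
    have := (integrable_indicator_iff hKm (f := Df) (μ := volume)).2 hDK
    exact this
  obtain ⟨D, hDs, hDe⟩ := hDi.1
  have hDI : Integrable D volume := hDi.congr hDe
  have hw' : ∀ ψ : Eucl n → ℝ, ContDiff ℝ (⊤ : ℕ∞) ψ → HasCompactSupport ψ →
      tsupport ψ ⊆ closedBall x1 (2 * R) →
      ∀ v : Eucl n, ∫ x, ψ x • D x v = - ∫ x, fderiv ℝ ψ x v • K.indicator f x := by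
    intro ψ h1 h2 h3 v
    have h := hw.2.2 ψ h1 h2 (h3.trans hB) v
    have e1 : ∫ x, ψ x • D x v = ∫ x, ψ x • Df x v := by
      refine integral_congr_ae ?_
      filter_upwards [hDe] with x hx
      by_cases hxK : x ∈ K
      · rw [← hx, indicator_of_mem hxK]
      · have : ψ x = 0 := image_eq_zero_of_notMem_tsupport fun h => hxK (h3 h)
        simp [this]
    have e2 : ∫ x, fderiv ℝ ψ x v • K.indicator f x = ∫ x, fderiv ℝ ψ x v • f x := by
      congr 1
      ext1 x
      by_cases hxK : x ∈ K
      · rw [indicator_of_mem hxK]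
      · have : fderiv ℝ ψ x = 0 := by
          refine image_eq_zero_of_notMem_tsupport fun h => hxK (h3 ?_)
          exact tsupport_fderiv_subset ℝ h
        simp [this]
    rw [e1, e2, h]
  let η : ℕ → ContDiffBump (0 : Eucl n) := fun j =>
    ⟨R / (2 * ((j : ℝ) + 1)), R / ((j : ℝ) + 1), by positivity, by
      apply div_lt_div_of_pos_left hR (by positivity)
      linarith [(Nat.cast_nonneg j : (0:ℝ) ≤ j)]⟩
  have hηR : ∀ j, (η j).rOut ≤ R := fun j => by
    change R / ((j : ℝ) + 1) ≤ R
    exact div_le_self hR.le (by linarith [(Nat.cast_nonneg j : (0:ℝ) ≤ j)])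
  have hηt : Tendsto (fun j => (η j).rOut) atTop (𝓝 0) := by
    change Tendsto (fun j : ℕ => R / ((j : ℝ) + 1)) atTop (𝓝 0)
    have := (tendsto_one_div_add_atTop_nhds_zero_nat (𝕜 := ℝ)).const_mul R
    simpa [div_eq_mul_inv] using this
  refine ⟨fun j => convolution ((η j).normed volume) (K.indicator f)
    (ContinuousLinearMap.lsmul ℝ ℝ) volume, D, hDs, hDI, ?_, ?_, ?_, ?_⟩
  · have : ∀ᵐ x ∂(volume.restrict (closedBall x1 R)), K.indicator Df x = D x :=
      ae_restrict_of_ae hDe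
    filter_upwards [this, ae_restrict_mem isClosed_closedBall.measurableSet] with x hx hxm
    rw [← hx, indicator_of_mem]
    exact closedBall_subset_closedBall (by linarith) hxm
  · intro j
    have := (η j).hasCompactSupport_normed (μ := volume) |>.contDiff_convolution_left (n := 1)
      (ContinuousLinearMap.lsmul ℝ ℝ) ((η j).contDiff_normed) hfi.locallyIntegrable
    exact_mod_cast this
  · rw [Metric.tendstoUniformlyOn_iff]
    intro ε hε
    have huc : UniformContinuousOn f K := hKc.uniformContinuousOn_of_continuous (hf.mono hB)
    obtain ⟨δ, hδ, hδf⟩ := Metric.uniformContinuousOn_iff.1 huc (ε / 2) (by positivity)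
    filter_upwards [(hηt.eventually_lt_const hδ)] with j hj x hx
    have hxK : x ∈ K := closedBall_subset_closedBall (by linarith) hx
    have := (η j).dist_normed_convolution_le (μ := volume) (x₀ := x) (ε := ε / 2) hfi.1 (by
      intro y hy
      rw [mem_ball] at hy
      have hyK : y ∈ K := by
        rw [hK, mem_closedBall]
        rw [mem_closedBall] at hx
        linarith [dist_triangle y x x1, hηR j]
      rw [indicator_of_mem hxK, indicator_of_mem hyK]
      exact (hδf y hyK x hxK (by linarith)).le)
    rw [indicator_of_mem hxK] at this
    rw [dist_comm]
    linarith
  · rw [ENNReal.tendsto_nhds_zero]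
    intro ε hε
    by_cases hεt : ε = ⊤
    · simp [hεt]
    obtain ⟨δ, hδ, hδD⟩ := aux_transl D hDI ε hε.ne' hεt
    filter_upwards [(hηt.eventually_lt_const hδ)] with j hj
    calc _ = ∫⁻ x in closedBall x1 R, ‖(∫ t, (η j).normed volume t • D (x - t)) - D x‖ₑ := by
          refine setLIntegral_congr_fun isClosed_closedBall.measurableSet fun x hx => ?_
          simp only
          rw [aux_moll_deriv x1 R hR _ hfi D hDI hw' (η j) (hηR j) x hx]
      _ ≤ ∫⁻ x, ‖(∫ t, (η j).normed volume t • D (x - t)) - D x‖ₑ := setLIntegral_le_lintegral _ _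
      _ ≤ ε := aux_moll_est D hDI hDs ε δ hδD (η j) hj.le

set_option maxHeartbeats 400000 in
theorem aux_chart {k : ℕ} (x0 x1 : Eucl (k + 1)) (hx : x1 ≠ x0) (R : ℝ) (hR : 0 < R) :
    ∃ (σ : (Fin k → ℝ) → Eucl (k + 1)) (Q₀ : Set (Fin k → ℝ)) (a b : ℝ) (L : ℝ≥0)
      (V : Set (Eucl (k + 1))),
      IsOpen Q₀ ∧ 0 < a ∧ 0 < b ∧ Continuous σ ∧ ContDiffOn ℝ 1 σ Q₀ ∧
      (∀ u ∈ Q₀, ‖fderiv ℝ σ u‖ ≤ L) ∧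
      (∀ r ∈ Ioo a b, ∀ u ∈ Q₀, x0 + r • σ u ∈ closedBall x1 R) ∧
      (∀ r ∈ Ioo a b, ∀ s ∈ Ioo a b, ∀ u ∈ Q₀, ∀ v ∈ Q₀,
        |r - s| ≤ ‖r • σ u - s • σ v‖ ∧ a * ‖u - v‖ ≤ 2 * ‖r • σ u - s • σ v‖) ∧
      V ∈ 𝓝 x1 ∧
      (∀ x ∈ V, dist x x0 ∈ Ioo a b ∧ ∃ u ∈ Q₀, x = x0 + dist x x0 • σ u) := by
  set r1 := dist x1 x0 with hr1
  have hr1p : 0 < r1 := dist_pos.2 hx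
  set e : Eucl (k + 1) := r1⁻¹ • (x1 - x0) with he
  have hen : ‖e‖ = 1 := by
    rw [he, norm_smul, ← dist_eq_norm, ← hr1, norm_inv, Real.norm_of_nonneg hr1p.le]
    exact inv_mul_cancel₀ hr1p.ne'
  obtain ⟨b, hb⟩ : ∃ b : OrthonormalBasis (Fin (k + 1)) ℝ (Eucl (k + 1)), b 0 = e := by
    obtain ⟨b, hb⟩ := Orthonormal.exists_orthonormalBasis_extension_of_card_eq (𝕜 := ℝ)
      (E := Eucl (k + 1)) (ι := Fin (k + 1)) (by simp) (v := fun _ => e) (s := {0}) (by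
        refine ⟨fun i => by simpa using hen, fun i j hij => ?_⟩
        exact absurd (Subsingleton.elim i j) hij)
    exact ⟨b, hb 0 rfl⟩
  have hx1 : x1 = x0 + r1 • b 0 := by
    rw [hb, he, smul_smul, mul_inv_cancel₀ hr1p.ne', one_smul]; abel
  obtain ⟨σ, hσ⟩ : ∃ σ : (Fin k → ℝ) → Eucl (k + 1), ∀ u,
      σ u = √(1 - ∑ i, u i ^ 2) • b 0 + ∑ i : Fin k, u i • b i.succ := ⟨_, fun u => rfl⟩
  have hσf := funext hσ
  have hσ0 : σ 0 = b 0 := by simp [hσ]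
  have hin0 : ∀ u, ⟪b 0, σ u⟫ = √(1 - ∑ i, u i ^ 2) := by
    intro u
    simp [hσ, inner_add_right, inner_sum, inner_smul_right, b.inner_eq_ite,
      (Fin.succ_ne_zero _).symm]
  have hins : ∀ u (i : Fin k), ⟪b i.succ, σ u⟫ = u i := by
    intro u i
    simp [hσ, inner_add_right, inner_sum, inner_smul_right, b.inner_eq_ite]
  have hσc : Continuous σ := by
    have : Continuous fun u : Fin k → ℝ =>
      √(1 - ∑ i, u i ^ 2) • b 0 + ∑ i : Fin k, u i • b i.succ := by fun_prop
    rw [hσf]; exact this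
  set W : Set (Fin k → ℝ) := {u | 0 < 1 - ∑ i, u i ^ 2} with hW
  have hWo : IsOpen W := by
    apply isOpen_lt <;> fun_prop
  have hW0 : (0 : Fin k → ℝ) ∈ W := by simp [hW]
  have hσn : ∀ u ∈ W, ‖σ u‖ = 1 := by
    intro u hu
    have h := b.sum_sq_norm_inner_right (σ u)
    rw [Fin.sum_univ_succ, hin0] at h
    simp only [hins, Real.norm_eq_abs, sq_abs] at h
    rw [Real.sq_sqrt (le_of_lt hu)] at h
    have : ‖σ u‖ ^ 2 = 1 := by linarith
    nlinarith [norm_nonneg (σ u)]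
  have hσd : ContDiffOn ℝ 1 σ W := by
    have h1 : ContDiffOn ℝ 1 (fun u : Fin k → ℝ => √(1 - ∑ i, u i ^ 2)) W := by
      refine ContDiffOn.sqrt ?_ fun u hu => ne_of_gt hu
      have : ContDiff ℝ 1 (fun u : Fin k → ℝ => 1 - ∑ i, u i ^ 2) := by fun_prop
      exact this.contDiffOn
    have h2 : ContDiff ℝ 1 (fun u : Fin k → ℝ => ∑ i : Fin k, u i • b i.succ) := by fun_prop
    rw [hσf]
    exact (h1.smul contDiffOn_const).add h2.contDiffOn
  have hfc : ContinuousAt (fderiv ℝ σ) 0 :=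
    (hσd.continuousOn_fderiv_of_isOpen hWo le_rfl).continuousAt (hWo.mem_nhds hW0)
  set L : ℝ≥0 := ‖fderiv ℝ σ 0‖₊ + 1 with hL
  have hev1 : ∀ᶠ u in 𝓝 (0 : Fin k → ℝ), ‖fderiv ℝ σ u‖ < L := by
    refine hfc.norm.eventually_lt_const ?_
    simp [hL]
  have hev2 : ∀ᶠ p : ℝ × (Fin k → ℝ) in 𝓝 (r1, 0), x0 + p.1 • σ p.2 ∈ ball x1 R := by
    have hc : Continuous fun p : ℝ × (Fin k → ℝ) => x0 + p.1 • σ p.2 := by fun_prop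
    refine hc.continuousAt.eventually_mem (isOpen_ball.mem_nhds ?_)
    simp only [hσ0, ← hx1]
    exact mem_ball_self hR
  obtain ⟨c1, hc1, hc1W⟩ := Metric.mem_nhds_iff.1 (hWo.mem_nhds hW0)
  obtain ⟨c2, hc2, hc2L⟩ := Metric.eventually_nhds_iff_ball.1 hev1
  obtain ⟨c3, hc3, hc3R⟩ := Metric.eventually_nhds_iff_ball.1 hev2
  set c := min c1 (min c2 c3) with hcdef
  have hc0 : 0 < c := by positivity
  have hcc1 : c ≤ c1 := min_le_left _ _
  have hcc2 : c ≤ c2 := (min_le_right _ _).trans (min_le_left _ _)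
  have hcc3 : c ≤ c3 := (min_le_right _ _).trans (min_le_right _ _)
  set d := min c (r1 / 2) with hd
  have hd0 : 0 < d := by positivity
  have hdr : d ≤ r1 / 2 := min_le_right _ _
  have hdc : d ≤ c := min_le_left _ _
  have hQW : ball (0 : Fin k → ℝ) c ⊆ W := (ball_subset_ball hcc1).trans hc1W
  refine ⟨σ, ball 0 c, r1 - d, r1 + d, L,
    {x | (r1 - d < dist x x0 ∧ dist x x0 < r1 + d) ∧
      (∀ i : Fin k, |⟪b i.succ, x - x0⟫| < c * dist x x0) ∧ 0 < ⟪b 0, x - x0⟫},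
    isOpen_ball, by linarith, by linarith, hσc, hσd.mono hQW, ?_, ?_, ?_, ?_, ?_⟩
  · intro u hu
    exact le_of_lt (hc2L u (ball_subset_ball hcc2 hu))
  · intro r hr u hu
    have : (r, u) ∈ ball ((r1, 0) : ℝ × (Fin k → ℝ)) c3 := by
      rw [mem_ball, Prod.dist_eq]
      refine max_lt ?_ ?_
      · rw [Real.dist_eq, abs_lt]
        constructor <;> linarith [hr.1, hr.2]
      · rw [mem_ball] at hu
        exact hu.trans_le hcc3
    have h2 : x0 + r • σ u ∈ ball x1 R := hc3R (r, u) this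
    exact ball_subset_closedBall h2
  · intro r hr s hs u hu v hv
    have hrp : 0 < r := by linarith [hr.1]
    have hsp : 0 < s := by linarith [hs.1]
    have h1 : |r - s| ≤ ‖r • σ u - s • σ v‖ := by
      have := abs_norm_sub_norm_le (r • σ u) (s • σ v)
      rwa [norm_smul, norm_smul, hσn u (hQW hu), hσn v (hQW hv), Real.norm_of_nonneg hrp.le,
        Real.norm_of_nonneg hsp.le, mul_one, mul_one] at this
    refine ⟨h1, ?_⟩
    have h2 : ∀ i, r * |u i - v i| ≤ 2 * ‖r • σ u - s • σ v‖ := by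
      intro i
      have h3 : ⟪b i.succ, r • σ u - s • σ v⟫ = r * u i - s * v i := by
        rw [inner_sub_right, inner_smul_right, inner_smul_right, hins, hins]
      have h4 : |r * u i - s * v i| ≤ ‖r • σ u - s • σ v‖ := by
        rw [← h3]
        refine (abs_real_inner_le_norm _ _).trans ?_
        rw [b.norm_eq_one, one_mul]
      have h5 : |v i| ≤ 1 := by
        rw [← hins v i]
        refine (abs_real_inner_le_norm _ _).trans ?_
        rw [b.norm_eq_one, one_mul, hσn v (hQW hv)]
      calc r * |u i - v i| = |(r * u i - s * v i) - (r - s) * v i| := by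
            rw [← abs_of_pos hrp, ← abs_mul, abs_of_pos hrp]; congr 1; ring
        _ ≤ |r * u i - s * v i| + |r - s| * |v i| := by
            rw [← abs_mul]; exact abs_sub _ _
        _ ≤ ‖r • σ u - s • σ v‖ + ‖r • σ u - s • σ v‖ * 1 := by gcongr
        _ = _ := by ring
    have h6 : ‖u - v‖ ≤ 2 * ‖r • σ u - s • σ v‖ / r := by
      refine (pi_norm_le_iff_of_nonneg (by positivity)).2 fun i => ?_
      rw [le_div_iff₀ hrp, mul_comm]
      exact h2 i
    rw [le_div_iff₀ hrp] at h6
    refine le_trans ?_ h6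
    rw [mul_comm]
    gcongr
    exact hr.1.le
  · have hsub : x1 - x0 = r1 • b 0 := by
      conv_lhs => rw [hx1]
      abel
    have e1 : ∀ᶠ x in 𝓝 x1, r1 - d < dist x x0 := by
      have hc : Continuous fun x : Eucl (k+1) => dist x x0 := by fun_prop
      exact hc.continuousAt.eventually_const_lt (by linarith)
    have e2 : ∀ᶠ x in 𝓝 x1, dist x x0 < r1 + d := by
      have hc : Continuous fun x : Eucl (k+1) => dist x x0 := by fun_prop
      exact hc.continuousAt.eventually_lt_const (by linarith)
    have e3 : ∀ᶠ x in 𝓝 x1, ∀ i : Fin k, |⟪b i.succ, x - x0⟫| < c * dist x x0 := by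
      rw [eventually_all]
      intro i
      have hc : Continuous fun x : Eucl (k+1) => c * dist x x0 := by fun_prop
      have hc' : Continuous fun x : Eucl (k+1) => |⟪b i.succ, x - x0⟫| := by fun_prop
      refine hc'.continuousAt.eventually_lt hc.continuousAt ?_
      rw [hsub, inner_smul_right, b.inner_eq_ite, if_neg (Fin.succ_ne_zero i), mul_zero, abs_zero]
      positivity
    have e4 : ∀ᶠ x in 𝓝 x1, 0 < ⟪b 0, x - x0⟫ := by
      have hc : Continuous fun x : Eucl (k+1) => ⟪b 0, x - x0⟫ := by fun_prop
      refine hc.continuousAt.eventually_const_lt ?_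
      beta_reduce
      rw [hsub, inner_smul_right, b.inner_eq_ite, if_pos rfl, mul_one]
      exact hr1p
    filter_upwards [e1, e2, e3, e4] with x h1 h2 h3 h4
    exact ⟨⟨h1, h2⟩, h3, h4⟩
  · rintro x ⟨hx1', hx2, hx3⟩
    refine ⟨hx1', ?_⟩
    set ρ := dist x x0 with hρ
    have hρ0 : 0 < ρ := by linarith [hx1'.1]
    set u : Fin k → ℝ := fun i => ⟪b i.succ, x - x0⟫ / ρ with hu
    have huQ : u ∈ ball (0 : Fin k → ℝ) c := by
      rw [mem_ball_zero_iff, pi_norm_lt_iff hc0]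
      intro i
      rw [Real.norm_eq_abs, hu, abs_div, abs_of_pos hρ0, div_lt_iff₀ hρ0]
      exact hx2 i
    refine ⟨u, huQ, ?_⟩
    have hsq := b.sum_sq_norm_inner_right (x - x0)
    rw [Fin.sum_univ_succ, ← dist_eq_norm, ← hρ] at hsq
    simp only [Real.norm_eq_abs, sq_abs] at hsq
    have hs : √(1 - ∑ i, u i ^ 2) = ⟪b 0, x - x0⟫ / ρ := by
      rw [Real.sqrt_eq_iff_mul_self_eq_of_pos (by positivity)]
      simp only [hu, div_pow, ← Finset.sum_div]
      field_simp
      linarith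
    have hrep := b.sum_repr' (x - x0)
    rw [Fin.sum_univ_succ] at hrep
    rw [hσ, hs, smul_add, smul_smul, mul_div_cancel₀ _ hρ0.ne', Finset.smul_sum]
    have : ∀ i, ρ • u i • b i.succ = ⟪b i.succ, x - x0⟫ • b i.succ := by
      intro i
      rw [smul_smul, hu, mul_div_cancel₀ _ hρ0.ne']
    simp only [this]
    rw [hrep]
    abel

theorem aux_transfer {k : ℕ} (x0 : Eucl (k + 1)) (σ : (Fin k → ℝ) → Eucl (k + 1))
    (Q₀ : Set (Fin k → ℝ)) (a b : ℝ) (ha : 0 < a)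
    (hanti : ∀ r ∈ Ioo a b, ∀ s ∈ Ioo a b, ∀ u ∈ Q₀, ∀ v ∈ Q₀,
        |r - s| ≤ ‖r • σ u - s • σ v‖ ∧ a * ‖u - v‖ ≤ 2 * ‖r • σ u - s • σ v‖) :
    ∃ C : ℝ≥0∞, C ≠ ⊤ ∧ ∀ A : Set (Eucl (k + 1)), MeasurableSet A →
      (volume : Measure (ℝ × (Fin k → ℝ)))
        ((fun p : ℝ × (Fin k → ℝ) => x0 + p.1 • σ p.2) ⁻¹' A ∩ Ioo a b ×ˢ Q₀) ≤ C * volume A := by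
  set Φ : ℝ × (Fin k → ℝ) → Eucl (k + 1) := fun p => x0 + p.1 • σ p.2 with hΦ
  set T : Set (ℝ × (Fin k → ℝ)) := Ioo a b ×ˢ Q₀ with hT
  obtain ⟨κ, hκ⟩ : ∃ κ : ℝ≥0, ∀ p ∈ T, ∀ q ∈ T, dist p q ≤ κ * dist (Φ p) (Φ q) := by
    refine ⟨⟨1 + 2 / a, by positivity⟩, ?_⟩
    rintro ⟨r, u⟩ ⟨hr, hu⟩ ⟨s, v⟩ ⟨hs, hv⟩
    obtain ⟨h1, h2⟩ := hanti r hr s hs u hu v hv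
    have h3 : dist (Φ (r, u)) (Φ (s, v)) = ‖r • σ u - s • σ v‖ := by
      simp [hΦ, dist_eq_norm]
    rw [h3, Prod.dist_eq]
    change _ ≤ (1 + 2 / a) * _
    have h4 : 0 ≤ 2 / a * ‖r • σ u - s • σ v‖ := by positivity
    refine max_le ?_ ?_
    · rw [Real.dist_eq]; nlinarith
    · rw [dist_eq_norm]
      have h5 : ‖u - v‖ ≤ 2 / a * ‖r • σ u - s • σ v‖ := by
        rw [div_mul_eq_mul_div, le_div_iff₀ ha, mul_comm]; exact h2
      nlinarith [norm_nonneg (r • σ u - s • σ v)]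
  obtain ⟨κ2, hκ2⟩ : ∃ κ2 : ℝ≥0, LipschitzWith κ2
      (WithLp.toLp 2 : (Fin (k + 1) → ℝ) → Eucl (k + 1)) := 
    ⟨_, PiLp.lipschitzWith_toLp 2 (fun _ : Fin (k + 1) => ℝ)⟩
  let e := MeasurableEquiv.piFinSuccAbove (fun _ : Fin (k + 1) => ℝ) 0
  have hmp : MeasurePreserving e volume volume :=
    volume_preserving_piFinSuccAbove (fun _ : Fin (k + 1) => ℝ) 0
  have hedist : ∀ p q, dist (e.symm p) (e.symm q) ≤ dist p q := by
    rintro ⟨r, u⟩ ⟨s, v⟩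
    refine (dist_pi_le_iff dist_nonneg).2 fun i => ?_
    refine Fin.cases ?_ (fun i => ?_) i
    · exact le_max_left (dist r s) (dist u v)
    · refine le_trans ?_ (le_max_right (dist r s) (dist u v))
      exact dist_le_pi_dist u v i
  set Ψ := Function.invFunOn Φ T with hΨ
  have hinj : InjOn Φ T := by
    intro p hp q hq h
    have := hκ p hp q hq
    rw [h, dist_self, mul_zero] at this
    exact dist_le_zero.1 this
  have hΨΦ : ∀ p ∈ T, Ψ (Φ p) = p := fun p hp => hinj.leftInvOn_invFunOn hp
  refine ⟨((κ * κ2 : ℝ≥0) : ℝ≥0∞) ^ ((k + 1 : ℕ) : ℝ),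
    ENNReal.rpow_ne_top_of_nonneg (by positivity) ENNReal.coe_ne_top, fun A hA => ?_⟩
  set B := Φ ⁻¹' A ∩ T with hB
  set S : Set (Fin (k + 1) → ℝ) := {y | WithLp.toLp 2 y ∈ Φ '' B} with hS
  have hlip : LipschitzOnWith (κ * κ2) (fun y => e.symm (Ψ (WithLp.toLp 2 y))) S := by
    refine LipschitzOnWith.of_dist_le_mul ?_
    rintro y ⟨p, hp, hpy⟩ z ⟨q, hq, hqz⟩
    rw [← hpy, ← hqz, hΨΦ p hp.2, hΨΦ q hq.2]
    refine (hedist p q).trans ((hκ p hp.2 q hq.2).trans ?_)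
    rw [hpy, hqz, NNReal.coe_mul, mul_assoc]
    gcongr
    exact hκ2.dist_le_mul y z
  have h1 := hlip.hausdorffMeasure_image_le (d := ((k + 1 : ℕ) : ℝ)) (by positivity)
  have hpi : (μH[((k + 1 : ℕ) : ℝ)] : Measure (Fin (k + 1) → ℝ)) = volume := by
    have := hausdorffMeasure_pi_real (ι := Fin (k + 1))
    rwa [Fintype.card_fin] at this
  rw [hpi] at h1
  rw [← hmp.measure_preimage_equiv]
  have hsub : e ⁻¹' B ⊆ (fun y => e.symm (Ψ (WithLp.toLp 2 y))) '' S := by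
    intro w hw
    refine ⟨WithLp.ofLp (Φ (e w)), ⟨e w, hw, rfl⟩, ?_⟩
    change e.symm (Ψ (Φ (e w))) = w
    rw [hΨΦ (e w) hw.2, e.symm_apply_apply]
  have hSA : volume S ≤ volume A := by
    rw [← (PiLp.volume_preserving_toLp (Fin (k + 1))).measure_preimage hA.nullMeasurableSet]
    refine measure_mono ?_
    rintro y ⟨p, hp, hpy⟩
    rw [mem_preimage, ← hpy]
    exact hp.1
  calc _ ≤ _ := measure_mono hsub
    _ ≤ _ := h1
    _ ≤ _ := by gcongr

theorem aux_frob_cont {n m : ℕ} : Continuous (frobNorm : (Eucl n →L[ℝ] Eucl m) → ℝ) := by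
  unfold frobNorm
  refine Real.continuous_sqrt.comp ?_
  refine continuous_finsetSum _ fun i _ => continuous_finsetSum _ fun j _ => ?_
  refine Continuous.pow ?_ 2
  have h1 : Continuous fun A : Eucl n →L[ℝ] Eucl m => A (EuclideanSpace.single j 1) := by fun_prop
  fun_prop

theorem aux_opNorm_le_frob {n m : ℕ} (A : Eucl n →L[ℝ] Eucl m) : ‖A‖ ≤ frobNorm A := by
  refine A.opNorm_le_bound (Real.sqrt_nonneg _) fun x => ?_
  have hx : x = ∑ j, x j • EuclideanSpace.single j (1 : ℝ) := by
    ext i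
    simp [Pi.single_apply]
  have h1 : ∀ i, (A x) i ^ 2 ≤ (∑ j, (A (EuclideanSpace.single j 1) i) ^ 2) * ∑ j, (x j) ^ 2 := by
    intro i
    have : (A x) i = ∑ j, A (EuclideanSpace.single j 1) i * x j := by
      conv_lhs => rw [hx]
      simp [map_sum, mul_comm]
    rw [this]
    exact Finset.sum_mul_sq_le_sq_mul_sq _ _ _
  unfold frobNorm
  rw [EuclideanSpace.norm_eq, EuclideanSpace.norm_eq, ← Real.sqrt_mul (by positivity)]
  refine Real.sqrt_le_sqrt ?_
  simp only [Real.norm_eq_abs, sq_abs]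
  rw [Finset.sum_mul]
  exact Finset.sum_le_sum fun i _ => h1 i

theorem aux_frob_nonneg {n m : ℕ} (A : Eucl n →L[ℝ] Eucl m) : 0 ≤ frobNorm A := Real.sqrt_nonneg _

/-- passing to slices along a subsequence -/
theorem aux_subseq {α β : Type*} [MeasurableSpace α] [MeasurableSpace β] (μ : Measure α) (ν : Measure β)
    [SFinite μ] [SFinite ν] (h : ℕ → α × β → ℝ≥0∞) (hm : ∀ j, Measurable (h j))
    (ht : Tendsto (fun j => ∫⁻ p, h j p ∂(μ.prod ν)) atTop (𝓝 0)) :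
    ∃ j : ℕ → ℕ, Tendsto j atTop atTop ∧
      ∀ᵐ x ∂μ, Tendsto (fun i => ∫⁻ y, h (j i) (x, y) ∂ν) atTop (𝓝 0) := by
  have h1 : ∀ i : ℕ, ∃ j, i ≤ j ∧ ∫⁻ p, h j p ∂(μ.prod ν) ≤ (2⁻¹ : ℝ≥0∞) ^ i := by
    intro i
    have hp : (0 : ℝ≥0∞) < (2⁻¹ : ℝ≥0∞) ^ i := by
      apply ENNReal.pow_pos; simp
    have := (ENNReal.tendsto_nhds_zero.1 ht _ hp).and (eventually_ge_atTop i)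
    obtain ⟨j, hj1, hj2⟩ := this.exists
    exact ⟨j, hj2, hj1⟩
  choose j hj1 hj2 using h1
  refine ⟨j, tendsto_atTop_mono hj1 tendsto_id, ?_⟩
  have hmm : ∀ i, Measurable fun x => ∫⁻ y, h (j i) (x, y) ∂ν := fun i =>
    (hm (j i)).lintegral_prod_right'
  have h2 : ∫⁻ x, ∑' i, ∫⁻ y, h (j i) (x, y) ∂ν ∂μ ≠ ⊤ := by
    rw [lintegral_tsum fun i => (hmm i).aemeasurable]
    have h3 : ∑' i, ∫⁻ x, ∫⁻ y, h (j i) (x, y) ∂ν ∂μ ≤ ∑' i : ℕ, (2⁻¹ : ℝ≥0∞) ^ i := by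
      refine ENNReal.tsum_le_tsum fun i => ?_
      rw [← lintegral_prod _ (hm (j i)).aemeasurable]
      exact hj2 i
    refine ne_top_of_le_ne_top ?_ h3
    rw [ENNReal.tsum_geometric]
    simp
  filter_upwards [ae_lt_top (Measurable.tsum hmm) h2] with x hx
  exact ENNReal.tendsto_atTop_zero_of_tsum_ne_top hx.ne

theorem aux_enorm_split {E : Type*} [NormedAddCommGroup E] (a b : E) :
    ‖a‖ₑ ≤ ‖b‖ₑ + ‖a - b‖ₑ := by
  calc ‖a‖ₑ = ‖b + (a - b)‖ₑ := by congr 1; abel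
    _ ≤ _ := enorm_add_le _ _

theorem aux_slice {k n m : ℕ} (hk : 2 ≤ k) (ψ : ℝ → ℝ) (N : ℝ → ℝ≥0∞) (hψ : Monotone ψ)
    (hψ0 : ∀ t ≤ 0, ψ t = 0) (hN : Antitone N) (hN0 : ∀ t, 0 < t → N t ≠ 0)
    (hNt : ∀ t, 0 < t → N t ≠ ⊤) (hNi : (∫⁻ t in Ioi (0:ℝ), N t) ≠ ⊤)
    (hNψ : ∀ t, 0 < t → ENNReal.ofReal t * (N t)^(-((k:ℝ)-1)) ≤ ENNReal.ofReal (ψ t))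
    (K : Set (Eucl n)) (f : Eucl n → Eucl m) (hf : ContinuousOn f K)
    (fj : ℕ → Eucl n → Eucl m) (hfj : ∀ j, ContDiff ℝ 1 (fj j))
    (hfu : TendstoUniformlyOn fj f atTop K)
    (D Df : Eucl n → Eucl n →L[ℝ] Eucl m) (hD : StronglyMeasurable D)
    (Q₀ : Set (Fin k → ℝ)) (hQ : IsOpen Q₀) (P : (Fin k → ℝ) → Eucl n) (hPc : Continuous P)
    (hPd : ContDiffOn ℝ 1 P Q₀) (L : ℝ≥0) (hPL : ∀ u ∈ Q₀, ‖fderiv ℝ P u‖ ≤ L)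
    (hPK : ∀ u ∈ Q₀, P u ∈ K)
    (κ : ℝ≥0) (hκ : ∀ u ∈ Q₀, ∀ v ∈ Q₀, dist u v ≤ κ * dist (P u) (P v))
    (hDr : ∀ᵐ u ∂(volume.restrict Q₀), D (P u) = Df (P u))
    (hfin : ∫⁻ u in Q₀, ENNReal.ofReal (ψ (frobNorm (D (P u)))) ≠ ⊤)
    (hel : Tendsto (fun j => ∫⁻ u in Q₀, ‖fderiv ℝ (fj j) (P u) - D (P u)‖ₑ) atTop (𝓝 0))
    (S : Set (Eucl n)) (hS : S ⊆ P '' Q₀) :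
    ACOnSet f S k ∧ ∀ E : Set (Eucl n), E ⊆ S → (∀ x ∈ E, frobNorm (Df x) = 0) →
        (μH[(k : ℝ)] : Measure (Eucl m)) (f '' E) = 0 := by
  have hgm : Measurable fun u => frobNorm (D (P u)) :=
    (aux_frob_cont.comp_stronglyMeasurable (hD.comp_measurable hPc.measurable)).measurable
  set h : (Fin k → ℝ) → ℝ≥0∞ := fun u => ENNReal.ofReal (ψ (frobNorm (D (P u)))) with hh
  have hhm : Measurable h := (hψ.measurable.comp hgm).ennreal_ofReal
  set μ : Measure (Fin k → ℝ) := (volume.restrict Q₀).withDensity h with hμ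
  have : IsFiniteMeasure μ := isFiniteMeasure_withDensity hfin
  set C : ℝ≥0∞ := ((4*L)^(k:ℝ) * (∫⁻ t in Ioi (0:ℝ), N t)^((k:ℝ)-1)) with hC
  have hk1 : (0:ℝ) ≤ (k:ℝ) - 1 := by
    have : (2:ℝ) ≤ k := by exact_mod_cast hk
    linarith
  have hCt : C ≠ ⊤ := by
    refine ENNReal.mul_ne_top (ENNReal.rpow_ne_top_of_nonneg (by positivity) ?_)
      (ENNReal.rpow_ne_top_of_nonneg hk1 hNi)
    exact ENNReal.mul_ne_top (by simp) ENNReal.coe_ne_top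
  have hFc : ContinuousOn (fun u => f (P u)) Q₀ := hf.comp hPc.continuousOn hPK
  have hosc : ∀ c ρ, 0 < ρ → closedBall c ρ ⊆ Q₀ →
      ediam ((fun u => f (P u)) '' closedBall c ρ)^(k:ℝ) ≤ C * μ (closedBall c ρ) := by
    intro c ρ hρ hB
    have h1 := aux_osc hk ψ N hN hN0 hNt hNψ Q₀ hQ (fun u => f (P u)) hFc
      (fun j u => fj j (P u)) (fun j => (hfj j).comp_contDiffOn hPd)
      ((hfu.comp P).mono hPK) (fun u => frobNorm (D (P u))) hgm (fun u => aux_frob_nonneg _)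
      (fun j u => ‖fderiv ℝ (fj j) (P u) - D (P u)‖ₑ) (fun j => by
        refine StronglyMeasurable.enorm ?_
        refine StronglyMeasurable.sub ?_ (hD.comp_measurable hPc.measurable)
        exact (((hfj j).continuous_fderiv one_ne_zero).comp hPc).stronglyMeasurable)
      L (fun j u hu => by
        have hd1 : HasFDerivAt (fj j) (fderiv ℝ (fj j) (P u)) (P u) :=
          ((hfj j).differentiable one_ne_zero _).hasFDerivAt
        have hd2 : HasFDerivAt P (fderiv ℝ P u) u :=
          ((hPd.contDiffAt (hQ.mem_nhds hu)).differentiableAt one_ne_zero).hasFDerivAt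
        have hd3 : HasFDerivAt (fun u => fj j (P u)) _ u := hd1.comp u hd2
        rw [hd3.fderiv]
        have e1 : ‖(fderiv ℝ (fj j) (P u)).comp (fderiv ℝ P u)‖ₑ ≤
            ‖fderiv ℝ (fj j) (P u)‖ₑ * ‖fderiv ℝ P u‖ₑ := by
          rw [← ofReal_norm, ← ofReal_norm, ← ofReal_norm, ← ENNReal.ofReal_mul (norm_nonneg _)]
          exact ENNReal.ofReal_le_ofReal (ContinuousLinearMap.opNorm_comp_le _ _)
        have e2 : ‖fderiv ℝ P u‖ₑ ≤ L := by
          rw [← ofReal_norm, ← ENNReal.ofReal_coe_nnreal]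
          exact ENNReal.ofReal_le_ofReal (hPL u hu)
        have e3 : ‖fderiv ℝ (fj j) (P u)‖ₑ ≤ ENNReal.ofReal (frobNorm (D (P u))) +
            ‖fderiv ℝ (fj j) (P u) - D (P u)‖ₑ := by
          calc _ ≤ ‖D (P u)‖ₑ + ‖fderiv ℝ (fj j) (P u) - D (P u)‖ₑ := aux_enorm_split _ _
            _ ≤ _ := by
              gcongr
              rw [← ofReal_norm]
              exact ENNReal.ofReal_le_ofReal (aux_opNorm_le_frob _)
        refine e1.trans ?_
        rw [mul_comm]
        exact mul_le_mul' e2 e3) hel c ρ hρ hB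
    refine h1.trans (le_of_eq ?_)
    rw [hμ, withDensity_apply', Measure.restrict_restrict isClosed_closedBall.measurableSet,
      inter_eq_self_of_subset_left hB]
  have hmain := aux_hausdorff Q₀ hQ (fun u => f (P u)) hFc μ C hCt hosc
  have hcov : ∀ A ⊆ S, (μH[(k : ℝ)] : Measure (Eucl m)) (f '' A) ≤ C * μ (P ⁻¹' A ∩ Q₀) := by
    intro A hA
    refine le_trans (measure_mono ?_) (hmain (P ⁻¹' A ∩ Q₀) inter_subset_right)
    rintro _ ⟨x, hx, rfl⟩
    obtain ⟨u, hu, rfl⟩ := hS (hA hx)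
    exact ⟨u, ⟨hx, hu⟩, rfl⟩
  have hpi : (μH[(k : ℝ)] : Measure (Fin k → ℝ)) = volume := by
    have := hausdorffMeasure_pi_real (ι := Fin k)
    rwa [Fintype.card_fin] at this
  have hinj : InjOn P Q₀ := by
    intro p hp q hq h
    have := hκ p hp q hq
    rw [h, dist_self, mul_zero] at this
    exact dist_le_zero.1 this
  have hvol : ∀ A, volume (P ⁻¹' A ∩ Q₀) ≤
      (κ : ℝ≥0∞) ^ (k : ℝ) * (μH[(k : ℝ)] : Measure (Eucl n)) A := by
    intro A
    set B := P ⁻¹' A ∩ Q₀ with hB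
    have hl : LipschitzOnWith κ (Function.invFunOn P Q₀) (P '' B) := by
      refine LipschitzOnWith.of_dist_le_mul ?_
      rintro _ ⟨u, hu, rfl⟩ _ ⟨v, hv, rfl⟩
      rw [hinj.leftInvOn_invFunOn hu.2, hinj.leftInvOn_invFunOn hv.2]
      exact hκ u hu.2 v hv.2
    have h1 := hl.hausdorffMeasure_image_le (d := (k : ℝ)) (by positivity)
    rw [hpi] at h1
    refine le_trans (measure_mono ?_) (h1.trans ?_)
    · intro u hu
      exact ⟨P u, ⟨u, hu, rfl⟩, hinj.leftInvOn_invFunOn hu.2⟩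
    · gcongr
      rintro _ ⟨u, hu, rfl⟩
      exact hu.1
  constructor
  · intro ε hε
    have hε' : ENNReal.ofReal ε / (C + 1) ≠ 0 := by
      refine ENNReal.div_ne_zero.2 ⟨by simpa using hε, by simp [hCt]⟩
    obtain ⟨δ, hδ, hδh⟩ := exists_pos_setLIntegral_lt_of_measure_lt hfin hε'
    have hκt : (κ : ℝ≥0∞) ^ (k : ℝ) ≠ ⊤ :=
      ENNReal.rpow_ne_top_of_nonneg (by positivity) ENNReal.coe_ne_top
    obtain ⟨δ', hδ', hδ'2⟩ : ∃ δ' : ℝ, 0 < δ' ∧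
        ENNReal.ofReal δ' ≤ (min δ 1) / ((κ : ℝ≥0∞) ^ (k : ℝ) + 1) := by
      have h1 : (min δ 1) / ((κ : ℝ≥0∞) ^ (k : ℝ) + 1) ≠ 0 := by
        refine ENNReal.div_ne_zero.2 ⟨(lt_min hδ one_pos).ne', by simp [hκt]⟩
      have h2 : (min δ 1) / ((κ : ℝ≥0∞) ^ (k : ℝ) + 1) ≠ ⊤ := by
        refine ENNReal.div_ne_top (ne_top_of_le_ne_top ENNReal.one_ne_top (min_le_right _ _)) (by simp)
      exact ⟨_, ENNReal.toReal_pos h1 h2, ENNReal.ofReal_toReal_le⟩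
    refine ⟨δ', hδ', fun A hA hAδ => ?_⟩
    have h1 : volume (P ⁻¹' A ∩ Q₀) < δ := by
      have h3 := hAδ.trans_le hδ'2
      have h4 : (μH[(k : ℝ)] : Measure (Eucl n)) A * ((κ : ℝ≥0∞) ^ (k : ℝ) + 1) < min δ 1 :=
        ENNReal.mul_lt_of_lt_div h3
      refine (hvol A).trans_lt (lt_of_le_of_lt ?_ (h4.trans_le (min_le_left _ _)))
      rw [mul_comm]
      gcongr
      exact le_self_add
    have h2 := hδh (P ⁻¹' A ∩ Q₀) ((Measure.restrict_apply_le _ _).trans_lt h1)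
    have h3 : μ (P ⁻¹' A ∩ Q₀) < ENNReal.ofReal ε / (C + 1) := by
      rw [hμ, withDensity_apply']; exact h2
    have h4 := ENNReal.mul_lt_of_lt_div h3
    refine (hcov A hA).trans_lt (lt_of_le_of_lt ?_ h4)
    rw [mul_comm]
    gcongr
    exact le_self_add
  · intro E hE hE0
    have hz : μ (P ⁻¹' E ∩ Q₀) = 0 := by
      set Z : Set (Fin k → ℝ) := {u | h u = 0} with hZ
      have hZm : MeasurableSet Z := hhm (measurableSet_singleton 0)
      have hZ0 : μ Z = 0 := by
        rw [hμ, withDensity_apply _ hZm]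
        rw [setLIntegral_congr_fun hZm (g := fun _ => 0) (fun u hu => hu)]
        simp
      have hac : ∀ᵐ u ∂μ, D (P u) = Df (P u) := (withDensity_absolutelyContinuous _ _).ae_le hDr
      have : P ⁻¹' E ∩ Q₀ ⊆ Z ∪ {u | ¬ D (P u) = Df (P u)} := by
        rintro u ⟨hu, hu2⟩
        by_cases hd : D (P u) = Df (P u)
        · left
          change ENNReal.ofReal (ψ (frobNorm (D (P u)))) = 0
          rw [hd, hE0 _ hu, hψ0 0 le_rfl, ENNReal.ofReal_zero]
        · right; exact hd
      refine measure_mono_null this (measure_union_null hZ0 hac)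
    have := hcov E hE
    rw [hz, mul_zero] at this
    exact le_antisymm this zero_le

theorem aux_patch {k m : ℕ} (hk : 2 ≤ k)
    (U : Set (Eucl (k + 1))) (hU : IsOpen U)
    (φ : ℝ → ℝ) (hφ : NondecPos φ) (hcal : CalderonCond (k + 1) φ)
    (f : Eucl (k + 1) → Eucl m) (Df : Eucl (k + 1) → Eucl (k + 1) →L[ℝ] Eucl m)
    (hf : ContinuousOn f U) (hs : MemOrliczSobolevOn φ U f Df)
    (x0 x1 : Eucl (k + 1)) (hx : x1 ≠ x0) (hx1 : x1 ∈ U) :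
    ∃ V ∈ 𝓝 x1, ∀ᵐ r ∂(volume : Measure ℝ),
      ACOnSet f (sphere x0 r ∩ V) k ∧
      ∀ E : Set (Eucl (k + 1)), E ⊆ sphere x0 r ∩ V → (∀ x ∈ E, frobNorm (Df x) = 0) →
        (μH[(k : ℝ)] : Measure (Eucl m)) (f '' E) = 0 := by
  obtain ⟨ψ, c, N, hψ, hψ0, hc, hψφ, hN, hN0, hNt, hNi, hNψ⟩ := aux_weight k hk φ hφ hcal
  obtain ⟨R, hR, hRU⟩ : ∃ R : ℝ, 0 < R ∧ closedBall x1 (2 * R) ⊆ U := by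
    obtain ⟨ε, hε, hεU⟩ := Metric.nhds_basis_closedBall.mem_iff.1 (hU.mem_nhds hx1)
    exact ⟨ε / 2, by positivity, by rwa [mul_div_cancel₀ _ two_ne_zero]⟩
  obtain ⟨fj, D, hDs, hDi, hDe, hfj, hfu, hft⟩ := aux_approx U f Df hf hs.1 x1 R hR hRU
  obtain ⟨σ, Q₀, a, b, L, V, hQ, ha, hb, hσc, hσd, hσL, hσK, hanti, hV, hVσ⟩ :=
    aux_chart x0 x1 hx R hR
  obtain ⟨C, hC, hCA⟩ := aux_transfer x0 σ Q₀ a b ha hanti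
  set K := closedBall x1 R with hK
  have hKm : MeasurableSet K := isClosed_closedBall.measurableSet
  have hKU : K ⊆ U := (closedBall_subset_closedBall (by linarith)).trans hRU
  set Φ : ℝ × (Fin k → ℝ) → Eucl (k + 1) := fun p => x0 + p.1 • σ p.2 with hΦ
  have hΦc : Continuous Φ := by rw [hΦ]; fun_prop
  set M : Measure (ℝ × (Fin k → ℝ)) := (volume.restrict (Ioo a b)).prod (volume.restrict Q₀) with hM
  have hM' : M = (volume : Measure (ℝ × (Fin k → ℝ))).restrict (Ioo a b ×ˢ Q₀) :=
    Measure.prod_restrict _ _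
  have hTm : MeasurableSet (Ioo a b ×ˢ Q₀) := measurableSet_Ioo.prod hQ.measurableSet
  -- pushforward estimate
  have hmap : M.map Φ ≤ C • volume.restrict K := by
    refine Measure.le_iff.2 fun A hA => ?_
    rw [Measure.map_apply hΦc.measurable hA, hM',
      Measure.restrict_apply (hΦc.measurable hA), Measure.smul_apply, Measure.restrict_apply hA,
      smul_eq_mul]
    refine le_trans (measure_mono ?_) (hCA (A ∩ K) (hA.inter hKm))
    rintro ⟨r, u⟩ ⟨h1, h2⟩
    exact ⟨⟨h1, hσK r h2.1 u h2.2⟩, h2⟩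
  have hint : ∀ g : Eucl (k + 1) → ℝ≥0∞, Measurable g →
      ∫⁻ p, g (Φ p) ∂M ≤ C * ∫⁻ x in K, g x := by
    intro g hg
    rw [← lintegral_map hg hΦc.measurable]
    refine (lintegral_mono' hmap le_rfl).trans ?_
    rw [lintegral_smul_measure, smul_eq_mul]
  -- (i)
  have hae1 : ∀ᵐ r ∂(volume.restrict (Ioo a b)), ∀ᵐ u ∂(volume.restrict Q₀),
      D (Φ (r, u)) = Df (Φ (r, u)) := by
    refine Measure.ae_ae_of_ae_prod (p := fun p => D (Φ p) = Df (Φ p)) ?_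
    refine ae_of_ae_map hΦc.aemeasurable (p := fun x => D x = Df x) ?_
    have hac : M.map Φ ≪ volume.restrict K :=
      (Measure.absolutelyContinuous_of_le hmap).trans (Measure.smul_absolutelyContinuous)
    exact hac.ae_le hDe
  -- (ii)
  have hhm : Measurable fun x => ENNReal.ofReal (ψ (frobNorm (D x))) :=
    (hψ.measurable.comp (aux_frob_cont.comp_stronglyMeasurable hDs).measurable).ennreal_ofReal
  have hKfin : ∫⁻ x in K, ENNReal.ofReal (ψ (frobNorm (D x))) ≠ ⊤ := by
    have h1 : ∫⁻ x in K, ENNReal.ofReal (ψ (frobNorm (D x))) ≤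
        ∫⁻ x in K, (ENNReal.ofReal (φ (frobNorm (Df x))) + ENNReal.ofReal c) := by
      refine lintegral_mono_ae ?_
      filter_upwards [hDe] with x hx
      rw [hx]
      rcases (aux_frob_nonneg (Df x)).eq_or_lt with h0 | h0
      · rw [hψ0 _ h0.symm.le]; simp
      · exact (ENNReal.ofReal_le_ofReal (hψφ _ h0)).trans ENNReal.ofReal_add_le
    refine ne_top_of_le_ne_top ?_ h1
    rw [lintegral_add_right _ measurable_const]
    refine ENNReal.add_ne_top.2 ⟨(hs.2 K hKU (isCompact_closedBall _ _)).ne, ?_⟩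
    rw [lintegral_const]
    refine ENNReal.mul_ne_top ENNReal.ofReal_ne_top ?_
    rw [Measure.restrict_apply_univ]
    exact (isCompact_closedBall x1 R).measure_lt_top.ne
  have hae2 : ∀ᵐ r ∂(volume.restrict (Ioo a b)),
      ∫⁻ u in Q₀, ENNReal.ofReal (ψ (frobNorm (D (Φ (r, u))))) < ⊤ := by
    have h1 := hint _ hhm
    have hmm : Measurable fun p => ENNReal.ofReal (ψ (frobNorm (D (Φ p)))) :=
      hhm.comp hΦc.measurable
    rw [hM, lintegral_prod _ hmm.aemeasurable] at h1
    exact ae_lt_top hmm.lintegral_prod_right'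
      (ne_top_of_le_ne_top (ENNReal.mul_ne_top hC hKfin) h1)
  -- (iii)
  have hem : ∀ j, Measurable fun x => ‖fderiv ℝ (fj j) x - D x‖ₑ := by
    intro j
    refine StronglyMeasurable.enorm ?_
    refine StronglyMeasurable.sub ?_ hDs
    exact ((hfj j).continuous_fderiv one_ne_zero).stronglyMeasurable
  have ht : Tendsto (fun j => ∫⁻ p, ‖fderiv ℝ (fj j) (Φ p) - D (Φ p)‖ₑ ∂M) atTop (𝓝 0) := by
    have h1 : Tendsto (fun j => C * ∫⁻ x in K, ‖fderiv ℝ (fj j) x - D x‖ₑ) atTop (𝓝 0) := by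
      have := ENNReal.Tendsto.const_mul hft (Or.inr hC)
      rwa [mul_zero] at this
    exact tendsto_of_tendsto_of_tendsto_of_le_of_le tendsto_const_nhds h1 (fun _ => zero_le)
      (fun j => hint _ (hem j))
  obtain ⟨js, hjs, hae3⟩ := aux_subseq _ _
    (fun j p => ‖fderiv ℝ (fj j) (Φ p) - D (Φ p)‖ₑ)
    (fun j => (hem j).comp hΦc.measurable) ht
  refine ⟨V, hV, ?_⟩
  have hall := (ae_restrict_iff' measurableSet_Ioo).1 (hae1.and (hae2.and hae3))
  filter_upwards [hall] with r hr
  by_cases hrI : r ∈ Ioo a b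
  · obtain ⟨h1, h2, h3⟩ := hr hrI
    have hr0 : 0 < r := ha.trans hrI.1
    have hPderiv : ∀ u ∈ Q₀, ‖fderiv ℝ (fun u => x0 + r • σ u) u‖ ≤ (⟨r, hr0.le⟩ * L : ℝ≥0) := by
      intro u hu
      have hd : HasFDerivAt σ (fderiv ℝ σ u) u :=
        ((hσd.contDiffAt (hQ.mem_nhds hu)).differentiableAt one_ne_zero).hasFDerivAt
      have hd2 : HasFDerivAt (fun u => x0 + r • σ u) (r • fderiv ℝ σ u) u :=
        (hd.const_smul r).const_add x0
      rw [hd2.fderiv, norm_smul, Real.norm_of_nonneg hr0.le]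
      change _ ≤ r * (L : ℝ)
      gcongr
      exact hσL u hu
    refine aux_slice hk ψ N hψ hψ0 hN hN0 hNt hNi hNψ K f (hf.mono hKU) (fun i => fj (js i))
      (fun i => hfj _) (fun s hs => hjs.eventually (hfu s hs)) D Df hDs Q₀ hQ (fun u => x0 + r • σ u)
      (by fun_prop) ?_ (⟨r, hr0.le⟩ * L) hPderiv (fun u hu => hσK r hrI u hu)
      ⟨2 / a, by positivity⟩ ?_ h1 h2.ne h3 _ ?_
    · exact contDiffOn_const.add (hσd.const_smul r)
    · intro u hu v hv
      have h5 := (hanti r hrI r hrI u hu v hv).2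
      have h6 : dist (x0 + r • σ u) (x0 + r • σ v) = ‖r • σ u - r • σ v‖ := by
        simp [dist_eq_norm]
      rw [h6, dist_eq_norm]
      change _ ≤ (2 / a) * _
      rw [div_mul_eq_mul_div, le_div_iff₀ ha, mul_comm]
      exact h5
    · rintro x ⟨hxs, hxV⟩
      obtain ⟨h7, u, hu, h8⟩ := hVσ x hxV
      rw [mem_sphere] at hxs
      rw [hxs] at h8
      exact ⟨u, hu, h8.symm⟩
  · have hemp : sphere x0 r ∩ V = ∅ := by
      rw [eq_empty_iff_forall_notMem]
      rintro x ⟨hxs, hxV⟩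
      have := (hVσ x hxV).1
      rw [mem_sphere] at hxs
      rw [hxs] at this
      exact hrI this
    rw [hemp]
    constructor
    · intro ε hε
      refine ⟨1, one_pos, fun A hA _ => ?_⟩
      rw [subset_empty_iff.1 hA, image_empty, measure_empty]
      simpa using hε
    · intro E hE _
      rw [subset_empty_iff.1 hE, image_empty, measure_empty]

theorem aux_ac_mono {n m : ℕ} {f : Eucl n → Eucl m} {S T : Set (Eucl n)} {d : ℝ}
    (h : ACOnSet f T d) (hST : S ⊆ T) : ACOnSet f S d := by
  intro ε hε
  obtain ⟨δ, hδ, H⟩ := h ε hε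
  exact ⟨δ, hδ, fun A hA => H A (hA.trans hST)⟩

theorem aux_ac_null {n m : ℕ} {f : Eucl n → Eucl m} {T : Set (Eucl n)} {d : ℝ}
    (h : ACOnSet f T d) (A : Set (Eucl n)) (hA : A ⊆ T) (h0 : (μH[d] : Measure (Eucl n)) A = 0) :
    (μH[d] : Measure (Eucl m)) (f '' A) = 0 := by
  by_contra hne
  obtain ⟨q, hq, hq2⟩ := ENNReal.lt_iff_exists_nnreal_btwn.1 (pos_iff_ne_zero.2 hne)
  obtain ⟨δ, hδ, H⟩ := h q (by exact_mod_cast hq)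
  have := H A hA (by rw [h0]; simpa using hδ)
  rw [ENNReal.ofReal_coe_nnreal] at this
  exact absurd (this.trans hq2) (lt_irrefl _)

/-- under the Calderón-type condition on `φ`, a continuous mapping of class
`W^{1,φ}_loc` has the (N)-property w.r.t. `H^{n-1}` on almost every sphere centered at a
prescribed point `x₀` (a.e. with respect to the radius), is locally absolutely continuous
on almost all such spheres, and on almost all of them `H^{n-1}(f(E)) = 0` whenever
`|∇f| = 0` on `E`. -/
theorem stmt_2 (n m : ℕ) (hn : 3 ≤ n) (hm : 1 ≤ m)
    (U : Set (Eucl n)) (hU : IsOpen U)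
    (φ : ℝ → ℝ) (hφ : NondecPos φ) (hcal : CalderonCond n φ)
    (f : Eucl n → Eucl m) (Df : Eucl n → Eucl n →L[ℝ] Eucl m)
    (hf_cont : ContinuousOn f U)
    (hf_sob : MemOrliczSobolevOn φ U f Df)
    (x₀ : Eucl n) :
    ∀ᵐ r ∂((volume : Measure ℝ).restrict (Ioi (0:ℝ))),
      LusinNOn f (sphere x₀ r ∩ U) ((n : ℝ) - 1) ∧
      LocACOnSet f (sphere x₀ r ∩ U) ((n : ℝ) - 1) ∧
      ∀ E : Set (Eucl n), E ⊆ sphere x₀ r ∩ U →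
        (∀ x ∈ E, frobNorm (Df x) = 0) →
        (μH[((n : ℝ) - 1)] : Measure (Eucl m)) (f '' E) = 0 := by
  obtain ⟨k, rfl⟩ : ∃ k, n = k + 1 := ⟨n - 1, by omega⟩
  have hk : 2 ≤ k := by omega
  have hcast : (((k + 1 : ℕ) : ℝ) - 1) = (k : ℝ) := by push_cast; ring
  rw [hcast]
  have hp := fun (x1 : Eucl (k + 1)) (h : x1 ≠ x₀ ∧ x1 ∈ U) =>
    aux_patch hk U hU φ hφ hcal f Df hf_cont hf_sob x₀ x1 h.1 h.2
  choose! V hV hVae using hp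
  obtain ⟨t, htS, htc, htcov⟩ := TopologicalSpace.countable_cover_nhdsWithin
    (f := fun x => interior (V x)) (s := {x | x ≠ x₀ ∧ x ∈ U}) (fun x hx => mem_nhdsWithin_of_mem_nhds (interior_mem_nhds.2 (hV x hx)))
  have hall : ∀ᵐ r ∂(volume : Measure ℝ), ∀ x ∈ t,
      (ACOnSet f (sphere x₀ r ∩ V x) k ∧
      ∀ E : Set (Eucl (k + 1)), E ⊆ sphere x₀ r ∩ V x → (∀ x ∈ E, frobNorm (Df x) = 0) →
        (μH[(k : ℝ)] : Measure (Eucl m)) (f '' E) = 0) :=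
    (ae_ball_iff htc).2 fun x hx => hVae x (htS hx)
  filter_upwards [ae_restrict_of_ae hall, ae_restrict_mem measurableSet_Ioi] with r hr hr0
  have hr0' : 0 < r := hr0
  have hne : ∀ x ∈ sphere x₀ r ∩ U, x ≠ x₀ ∧ x ∈ U := by
    rintro x ⟨hxs, hxU⟩
    refine ⟨?_, hxU⟩
    rintro rfl
    rw [mem_sphere, dist_self] at hxs
    exact hr0'.ne hxs
  have hcov : ∀ A ⊆ sphere x₀ r ∩ U, A ⊆ ⋃ x ∈ t, (A ∩ V x) := by
    intro A hA y hy
    have := htcov (hne y (hA hy))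
    simp only [mem_iUnion] at this ⊢
    obtain ⟨x, hx, hyx⟩ := this
    exact ⟨x, hx, hy, interior_subset hyx⟩
  have hnull : ∀ A ⊆ sphere x₀ r ∩ U,
      (∀ x ∈ t, (μH[(k : ℝ)] : Measure (Eucl m)) (f '' (A ∩ V x)) = 0) →
      (μH[(k : ℝ)] : Measure (Eucl m)) (f '' A) = 0 := by
    intro A hA h
    refine measure_mono_null (image_mono (hcov A hA)) ?_
    simp only [image_iUnion]
    exact (measure_biUnion_null_iff htc).2 h
  refine ⟨?_, ?_, ?_⟩
  · intro A hA h0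
    refine hnull A hA fun x hx => ?_
    exact aux_ac_null (hr x hx).1 _ (inter_subset_inter_left _ (hA.trans inter_subset_left))
      (measure_mono_null inter_subset_left h0)
  · intro y hy
    obtain ⟨x, hx, hyx⟩ : ∃ x ∈ t, y ∈ interior (V x) := by
      have := htcov (hne y hy)
      simp only [mem_iUnion] at this
      obtain ⟨x, hx, hyx⟩ := this
      exact ⟨x, hx, hyx⟩
    refine ⟨V x, mem_interior_iff_mem_nhds.1 hyx, ?_⟩
    exact aux_ac_mono (hr x hx).1 (inter_subset_inter_left _ inter_subset_left)
  · intro E hE hE0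
    refine hnull E hE fun x hx => ?_
    exact (hr x hx).2 _ (inter_subset_inter_left _ (hE.trans inter_subset_left))
      fun y hy => hE0 y hy.1
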